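/- arXiv:2307.14769 — 2 statements merged into one kernel-verified Lean document; each statement's English description precedes it below -/
import Mathlib

section
/- Every spherical polygon on the unit 2-sphere that has no self-intersection and all of whose interior angles are strictly less than π is contained in a closed hemisphere. -/
noncomputable section
open Real
open scoped RealInnerProductSpace

/-- Euclidean 3-space; the unit sphere in it is the 2-sphere `S²`. -/
abbrev E3 : Type := EuclideanSpace ℝ (Fin 3)

/-- The determinant (triple product) of three vectors in `ℝ³`.  For unit
vectors `p, x, q`, the condition `0 < det3 p x q` says that `q` lies strictly
on the left of the oriented great circle through `p` and `x`; at a vertex `x`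
of a spherical polygon with neighbours `p, q` this is equivalent to the
interior angle at `x` (measured on the left side) being strictly less
than `π`. -/
def det3 (u v w : E3) : ℝ :=
  u 0 * (v 1 * w 2 - v 2 * w 1) - u 1 * (v 0 * w 2 - v 2 * w 0) +
    u 2 * (v 0 * w 1 - v 1 * w 0)

/-- The (short) geodesic arc on the unit sphere joining two unit vectors
`v` and `w`: the radial projection of the segment between them. -/
def arcSeg (v w : E3) : Set E3 :=
  {x | ∃ a b : ℝ, 0 ≤ a ∧ 0 ≤ b ∧ 0 < a + b ∧
    x = ‖a • v + b • w‖⁻¹ • (a • v + b • w)}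

/-- The spherical (great-circle) distance between two unit vectors. -/
def sdist (v w : E3) : ℝ := Real.arccos ⟪v, w⟫

/-- The spherical angle at `x` between the geodesics from `x` toward `p` and
from `x` toward `q`: the angle between the tangent directions, valued
in `[0, π]`. -/
def sangle (p x q : E3) : ℝ :=
  InnerProductGeometry.angle (p - ⟪p, x⟫ • x) (q - ⟪q, x⟫ • x)

/-!
A small perturbation of the vertices puts them in general position and preserves both the strict
left turns and the disjointness of nonadjacent edges, so by continuity it is enough to show that a
simple left-turning polygon in general position is convex: each vertex is to the left of each edge
it is not on. This goes by induction on the number of vertices. Among the vertices in the triangle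
`w 0, w 1, w 2`, let `w k` be the one whose direction from `w 0` is closest to that of `w 1`. The
diagonal from `w 0` to `w k` then bounds a corner at `w 1` containing no vertex, hence crossed by
no edge, and the polygon `w k, …, w n = w 0` beyond it is again simple and left-turning, thus
convex by induction. If `k > 2`, the path from `w k` back to `w 1` would start to the left of this
convex polygon and could never leave it, although `w 1` is to the right of the diagonal. So `k = 2`:
cutting off `w 1` leaves a convex polygon. A given edge survives in it if the numbering starts at
the end of that edge, and the vertex cut off is to the left of it because the turn at `w 0` is.

Crossings are detected by one principle: on the way out of the region to the left of all edges of a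
left-turning polygon, the first great circle to be reached is reached on the edge itself.
-/

section Cone

variable {E : Type*} [AddCommGroup E] [Module ℝ E]

/-- The cone over the arc from `p` to `q`, without its apex. Arcs of the sphere are replaced by the
cones over them, which are disjoint exactly if the arcs are, to avoid normalizing vectors. -/
def arcCone (p q : E) : Set E :=
  {z | ∃ α β : ℝ, 0 ≤ α ∧ 0 ≤ β ∧ 0 < α + β ∧ z = α • p + β • q}

theorem left_mem_arcCone (p q : E) : p ∈ arcCone p q :=
  ⟨1, 0, by simp⟩

theorem right_mem_arcCone (p q : E) : q ∈ arcCone p q :=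
  ⟨0, 1, by simp⟩

theorem arcCone_subset_of_mem {p q c : E} (hc : c ∈ arcCone p q) :
    arcCone p c ⊆ arcCone p q := by
  obtain ⟨a, b, ha, hb, hab, rfl⟩ := hc
  rintro _ ⟨α, β, hα, hβ, hαβ, rfl⟩
  refine ⟨α + β * a, β * b, by positivity, by positivity, ?_, by module⟩
  rcases hβ.eq_or_lt with rfl | hβ
  · simpa using hαβ
  · nlinarith [mul_pos hβ hab]

theorem convex_arcCone (p q : E) : Convex ℝ (arcCone p q) := by
  rintro _ ⟨α, β, hα, hβ, hαβ, rfl⟩ _ ⟨γ, δ, hγ, hδ, hγδ, rfl⟩ s t hs ht hst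
  refine ⟨s * α + t * γ, s * β + t * δ, by positivity, by positivity, ?_, by module⟩
  rcases hs.eq_or_lt with rfl | hs
  · rw [zero_add] at hst
    simpa [hst] using hγδ
  · nlinarith [mul_pos hs hαβ, mul_nonneg ht hγδ.le]

theorem map_neg_of_mem_arcCone {f : E →ₗ[ℝ] ℝ} {p q z : E} (hp : f p < 0) (hq : f q < 0)
    (hz : z ∈ arcCone p q) : f z < 0 := by
  obtain ⟨α, β, hα, hβ, hαβ, rfl⟩ := hz
  simp only [map_add, map_smul, smul_eq_mul]
  rcases hα.eq_or_lt with rfl | hα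
  · nlinarith
  · nlinarith [mul_neg_of_pos_of_neg hα hp, mul_nonpos_of_nonneg_of_nonpos hβ hq.le]

/-- The first half-space to be left is the one for which `f i x / (f i x - f i y)`, the parameter of
the point where the segment crosses its boundary, is least. -/
theorem exists_first_exit {ι : Type*} (s : Finset ι) (f : ι → E →ₗ[ℝ] ℝ) {x y : E}
    (hx : ∀ i ∈ s, 0 ≤ f i x) (hxy : ∀ i ∈ s, 0 < f i y ∨ 0 < f i x)
    (hy : ∃ i ∈ s, f i y ≤ 0) :
    ∃ i ∈ s, f i y ≤ 0 ∧ ∃ z ∈ segment ℝ x y, f i z = 0 ∧ ∀ j ∈ s, 0 ≤ f j z := by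
  have hpos : ∀ i ∈ s, f i y ≤ 0 → 0 < f i x := fun i hi h => (hxy i hi).resolve_left h.not_gt
  have hne : (s.filter fun i => f i y ≤ 0).Nonempty := by
    obtain ⟨i, hi, h⟩ := hy
    exact ⟨i, Finset.mem_filter.2 ⟨hi, h⟩⟩
  obtain ⟨i, hi, hmin⟩ :=
    Finset.exists_min_image _ (fun i => f i x / (f i x - f i y)) hne
  obtain ⟨his, hiy⟩ := Finset.mem_filter.1 hi
  have hden : 0 < f i x - f i y := by linarith [hpos i his hiy]
  set t := f i x / (f i x - f i y) with ht
  have ht0 : 0 ≤ t := div_nonneg (hx i his) hden.le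
  have ht1 : t ≤ 1 := by
    rw [ht, div_le_one hden]
    linarith
  have hval (j : ι) : f j ((1 - t) • x + t • y) = (1 - t) * f j x + t * f j y := by
    simp only [map_add, map_smul, smul_eq_mul]
  refine ⟨i, his, hiy, (1 - t) • x + t • y, ⟨1 - t, t, by linarith, ht0, by ring, rfl⟩, ?_, ?_⟩
  · rw [hval, ht]
    field_simp
    ring
  · intro j hj
    rw [hval]
    rcases le_or_gt (f j y) 0 with hjy | hjy
    · have hle := hmin j (Finset.mem_filter.2 ⟨hj, hjy⟩)
      rw [le_div_iff₀ (by linarith [hpos j hj hjy])] at hle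
      linarith
    · have := mul_nonneg (sub_nonneg.2 ht1) (hx j hj)
      positivity

end Cone

section TripleProduct

theorem det3_rotate (a b c : E3) : det3 a b c = det3 b c a := by
  unfold det3; ring

theorem det3_swap_left (a b c : E3) : det3 a b c = -det3 b a c := by
  unfold det3; ring

theorem det3_swap_right (a b c : E3) : det3 a b c = -det3 a c b := by
  unfold det3; ring

theorem det3_self_right (a b : E3) : det3 a b b = 0 := by
  unfold det3; ring

theorem det3_self_outer (a b : E3) : det3 a b a = 0 := by
  unfold det3; ring

/-- The linear form whose sign says on which side of the oriented great circle through `p` and `q`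
a vector lies. -/
def leftForm (p q : E3) : E3 →ₗ[ℝ] ℝ where
  toFun := det3 p q
  map_add' x y := by simp only [det3, PiLp.add_apply]; ring
  map_smul' c x := by simp only [det3, PiLp.smul_apply, smul_eq_mul, RingHom.id_apply]; ring

theorem leftForm_apply (p q z : E3) : leftForm p q z = det3 p q z := rfl

theorem det3_combination (p q x y : E3) (α β : ℝ) :
    det3 p q (α • x + β • y) = α * det3 p q x + β * det3 p q y := by
  simp only [← leftForm_apply, map_add, map_smul, smul_eq_mul]

theorem det3_smul_eq (a b c z : E3) :
    det3 a b c • z = det3 b c z • a + det3 c a z • b + det3 a b z • c := by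
  ext j
  fin_cases j <;> simp [det3] <;> ring

theorem det3_plucker (a b c x y : E3) :
    det3 a b c * det3 x a y = det3 a b x * det3 c a y - det3 c a x * det3 a b y := by
  unfold det3; ring

theorem zero_notMem_arcCone {p q r : E3} (h : det3 p q r ≠ 0) : (0 : E3) ∉ arcCone p q := by
  rintro ⟨α, β, -, -, hαβ, h0⟩
  have hα : det3 q r (α • p + β • q) = 0 := by rw [← h0, ← leftForm_apply, map_zero]
  have hβ : det3 r p (α • p + β • q) = 0 := by rw [← h0, ← leftForm_apply, map_zero]
  rw [det3_combination, det3_self_outer, ← det3_rotate] at hα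
  rw [det3_combination, det3_self_right, det3_rotate] at hβ
  simp only [mul_zero, add_zero, zero_add, mul_eq_zero, h, or_false] at hα hβ
  simp [hα, hβ] at hαβ

theorem mem_arcCone_of_det3_eq_zero {o p q r z : E3} (hopq : 0 < det3 o p q)
    (hpqr : 0 < det3 p q r) (hz : z ≠ 0) (hpq : det3 p q z = 0) (hop : 0 ≤ det3 o p z)
    (hqr : 0 ≤ det3 q r z) : z ∈ arcCone p q := by
  have hcombo : z = (det3 q o z / det3 o p q) • p + (det3 o p z / det3 o p q) • q := by
    have cramer := det3_smul_eq o p q z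
    rw [hpq, zero_smul, zero_add] at cramer
    rw [div_eq_inv_mul, div_eq_inv_mul, mul_smul, mul_smul, ← smul_add, ← cramer,
      inv_smul_smul₀ hopq.ne']
  set α := det3 q o z / det3 o p q
  set β := det3 o p z / det3 o p q
  have hβ : 0 ≤ β := by positivity
  have hα : 0 ≤ α := by
    rw [hcombo, det3_combination, det3_self_outer, ← det3_rotate, mul_zero, add_zero] at hqr
    exact nonneg_of_mul_nonneg_left hqr hpqr
  refine ⟨α, β, hα, hβ, (add_nonneg hα hβ).lt_of_ne fun h0 => hz ?_, hcombo⟩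
  rw [hcombo, show α = 0 by linarith, show β = 0 by linarith, zero_smul, zero_smul, add_zero]

end TripleProduct

section Polygon

/-- A closed polygon with `n` vertices all of whose turns are strictly to the left. The vertices
are indexed by all natural numbers, periodically, so that no edge is special. -/
structure IsLeftTurning (n : ℕ) (w : ℕ → E3) : Prop where
  pos : 0 < n
  periodic : Function.Periodic w n
  left_turn : ∀ i, 0 < det3 (w i) (w (i + 1)) (w (i + 2))

/-- A left-turning polygon without self-intersection: edges without a common vertex are
disjoint. -/
structure IsSimpleLeftTurning (n : ℕ) (w : ℕ → E3) : Prop extends IsLeftTurning n w where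
  disjoint_edges : ∀ i j, ¬ i ≡ j [MOD n] → ¬ i + 1 ≡ j [MOD n] → ¬ i ≡ j + 1 [MOD n] →
    Disjoint (arcCone (w i) (w (i + 1))) (arcCone (w j) (w (j + 1)))

/-- A simple left-turning polygon in general position: no three vertices are on a great circle. -/
structure IsGenericLeftTurning (n : ℕ) (w : ℕ → E3) : Prop extends IsSimpleLeftTurning n w where
  det3_ne_zero_of_not_modEq : ∀ i j k, ¬ i ≡ j [MOD n] → ¬ j ≡ k [MOD n] → ¬ i ≡ k [MOD n] →
    det3 (w i) (w j) (w k) ≠ 0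

/-- The open region to the left of all edges of a polygon. -/
def leftRegion (w : ℕ → E3) : Set E3 :=
  {z | ∀ i, 0 < det3 (w i) (w (i + 1)) z}

variable {n : ℕ} {w : ℕ → E3}

theorem IsLeftTurning.exists_prev (h : IsLeftTurning n w) (i : ℕ) :
    ∃ j, w (j + 1) = w i ∧ 0 < det3 (w j) (w i) (w (i + 1)) := by
  have hn := h.pos
  have hi : w (i + n - 1 + 1) = w i := by rw [Nat.sub_add_cancel (by omega), h.periodic]
  refine ⟨i + n - 1, hi, ?_⟩
  have hturn := h.left_turn (i + n - 1)
  rwa [hi, show i + n - 1 + 2 = i + 1 + n by omega, h.periodic] at hturn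

/-- The segment from `x` to `y` would leave the region through an edge: by the left turns at both
of its endpoints, a great circle bounds the region along the edge only. -/
theorem IsLeftTurning.mem_leftRegion (h : IsLeftTurning n w) {K : Set E3} (hK : Convex ℝ K)
    (h0 : 0 ∉ K) {x y : E3} (hxK : x ∈ K) (hyK : y ∈ K)
    (hx : ∀ i, 0 ≤ det3 (w i) (w (i + 1)) x)
    (hy : ∀ i, 0 < det3 (w i) (w (i + 1)) y ∨
      0 < det3 (w i) (w (i + 1)) x ∧ Disjoint K (arcCone (w i) (w (i + 1)))) :
    y ∈ leftRegion w := by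
  by_contra hyw
  simp only [leftRegion, Set.mem_ofPred_eq, not_forall, not_lt] at hyw
  have hper (z : E3) : Function.Periodic (fun i => det3 (w i) (w (i + 1)) z) n := fun i => by
    simp only [add_right_comm i n 1, h.periodic i, h.periodic (i + 1)]
  have hmod (z : E3) (i : ℕ) :
      det3 (w (i % n)) (w (i % n + 1)) z = det3 (w i) (w (i + 1)) z := (hper z).map_mod_nat i
  obtain ⟨i, -, hiy, z, hzxy, hiz, hz⟩ :=
    exists_first_exit (Finset.range n) (fun i => leftForm (w i) (w (i + 1)))
      (fun i _ => hx i) (fun i _ => (hy i).imp_right And.left) <| by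
        obtain ⟨i, hi⟩ := hyw
        exact ⟨i % n, Finset.mem_range.2 (Nat.mod_lt _ h.pos), (hmod y i).trans_le hi⟩
  have hzK : z ∈ K := hK.segment_subset hxK hyK hzxy
  have hz_nonneg (j : ℕ) : 0 ≤ det3 (w j) (w (j + 1)) z := by
    rw [← hmod]
    exact hz _ (Finset.mem_range.2 (Nat.mod_lt _ h.pos))
  obtain ⟨j, hj, hturn⟩ := h.exists_prev i
  have hzedge : z ∈ arcCone (w i) (w (i + 1)) :=
    mem_arcCone_of_det3_eq_zero hturn (h.left_turn i) (ne_of_mem_of_not_mem hzK h0) hiz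
      (hj ▸ hz_nonneg j) (hz_nonneg (i + 1))
  exact Set.disjoint_left.1 ((hy i).resolve_left hiy.not_gt).2 hzK hzedge

theorem IsSimpleLeftTurning.disjoint_of_lt (h : IsSimpleLeftTurning n w) {i j : ℕ}
    (hij : i + 1 < j) (hjn : j + 1 < i + n) :
    Disjoint (arcCone (w i) (w (i + 1))) (arcCone (w j) (w (j + 1))) :=
  h.disjoint_edges i j (fun hm => by have := hm.add_le_of_lt (by omega); omega)
    (fun hm => by have := hm.add_le_of_lt (by omega); omega)
    (fun hm => by have := hm.add_le_of_lt (by omega); omega)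

theorem IsGenericLeftTurning.det3_ne_zero (h : IsGenericLeftTurning n w) {i j k : ℕ} (hi : i < n)
    (hj : j < n) (hk : k < n) (hij : i ≠ j) (hjk : j ≠ k) (hik : i ≠ k) :
    det3 (w i) (w j) (w k) ≠ 0 :=
  h.det3_ne_zero_of_not_modEq i j k (fun hm => hij (hm.eq_of_lt_of_lt hi hj))
    (fun hm => hjk (hm.eq_of_lt_of_lt hj hk)) (fun hm => hik (hm.eq_of_lt_of_lt hi hk))

theorem IsGenericLeftTurning.shift (h : IsGenericLeftTurning n w) (s : ℕ) :
    IsGenericLeftTurning n fun j => w (j + s) where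
  pos := h.pos
  periodic i := by simp only [add_right_comm i n s, h.periodic (i + s)]
  left_turn i := by simpa only [add_right_comm] using h.left_turn (i + s)
  disjoint_edges i j hij hij' hij'' := by
    rw [add_right_comm i, add_right_comm j]
    exact h.disjoint_edges _ _ (fun hm => hij hm.add_right_cancel')
      (fun hm => hij' (Nat.ModEq.add_right_cancel' s (by rwa [add_right_comm])))
      (fun hm => hij'' (Nat.ModEq.add_right_cancel' s (by rwa [add_right_comm j])))
  det3_ne_zero_of_not_modEq i j k hij hjk hik :=
    h.det3_ne_zero_of_not_modEq _ _ _ (fun hm => hij hm.add_right_cancel')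
      (fun hm => hjk hm.add_right_cancel') (fun hm => hik hm.add_right_cancel')

end Polygon

section Triangle

/-- The periodic vertex sequence of a triangle. -/
def triangle (p q r : E3) (i : ℕ) : E3 :=
  if i % 3 = 0 then p else if i % 3 = 1 then q else r

theorem forall_triangle_edge {P : E3 → E3 → Prop} {p q r : E3} (hpq : P p q) (hqr : P q r)
    (hrp : P r p) (i : ℕ) : P (triangle p q r i) (triangle p q r (i + 1)) := by
  have hi : i % 3 = 0 ∧ (i + 1) % 3 = 1 ∨ i % 3 = 1 ∧ (i + 1) % 3 = 2 ∨
      i % 3 = 2 ∧ (i + 1) % 3 = 0 := by omega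
  rcases hi with ⟨hi, hi'⟩ | ⟨hi, hi'⟩ | ⟨hi, hi'⟩ <;> simpa [triangle, hi, hi']

theorem isLeftTurning_triangle {p q r : E3} (h : 0 < det3 p q r) :
    IsLeftTurning 3 (triangle p q r) where
  pos := by norm_num
  periodic i := by simp only [triangle, Nat.add_mod_right]
  left_turn i := by
    have hi : i % 3 = 0 ∧ (i + 1) % 3 = 1 ∧ (i + 2) % 3 = 2 ∨
        i % 3 = 1 ∧ (i + 1) % 3 = 2 ∧ (i + 2) % 3 = 0 ∨
        i % 3 = 2 ∧ (i + 1) % 3 = 0 ∧ (i + 2) % 3 = 1 := by omega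
    rcases hi with ⟨hi, hi', hi''⟩ | ⟨hi, hi', hi''⟩ | ⟨hi, hi', hi''⟩ <;>
      simp only [triangle, hi, hi', hi'', reduceIte, OfNat.ofNat_ne_zero, OfNat.ofNat_ne_one,
        one_ne_zero]
    · exact h
    · rwa [← det3_rotate]
    · rwa [det3_rotate]

end Triangle

section Subpolygon

/-- The periodic vertex sequence of the polygon `w k, w (k + 1), …, w (k + m)` that a diagonal
cuts off from `w`. -/
def subpolygon (w : ℕ → E3) (k m i : ℕ) : E3 :=
  w (k + i % (m + 1))

variable {w : ℕ → E3} {k m n : ℕ}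

theorem subpolygon_of_mod_eq {i r : ℕ} (hi : i % (m + 1) = r) :
    subpolygon w k m i = w (k + r) := by
  rw [subpolygon, hi]

theorem mod_succ_cases (m i : ℕ) :
    i % (m + 1) < m ∧ (i + 1) % (m + 1) = i % (m + 1) + 1 ∨
      i % (m + 1) = m ∧ (i + 1) % (m + 1) = 0 := by
  have hlt : i % (m + 1) < m + 1 := Nat.mod_lt _ m.succ_pos
  rw [← Nat.mod_add_mod]
  rcases (Nat.lt_succ_iff.1 hlt).lt_or_eq with him | him
  · exact .inl ⟨him, Nat.mod_eq_of_lt (by omega)⟩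
  · exact .inr ⟨him, by rw [him, Nat.mod_self]⟩

theorem forall_subpolygon_edge {P : E3 → E3 → Prop}
    (hedge : ∀ r < m, P (w (k + r)) (w (k + r + 1))) (hdiag : P (w (k + m)) (w k)) (i : ℕ) :
    P (subpolygon w k m i) (subpolygon w k m (i + 1)) := by
  rcases mod_succ_cases m i with ⟨hi, hi'⟩ | ⟨hi, hi'⟩
  · rw [subpolygon_of_mod_eq rfl, subpolygon_of_mod_eq hi']
    exact hedge _ hi
  · rwa [subpolygon_of_mod_eq hi, subpolygon_of_mod_eq hi']

theorem subpolygon_left_turn (hm : 2 ≤ m)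
    (hturn : ∀ i, 0 < det3 (w i) (w (i + 1)) (w (i + 2)))
    (hlast : 0 < det3 (w (k + m - 1)) (w (k + m)) (w k))
    (hfirst : 0 < det3 (w (k + m)) (w k) (w (k + 1))) (i : ℕ) :
    0 < det3 (subpolygon w k m i) (subpolygon w k m (i + 1)) (subpolygon w k m (i + 2)) := by
  rcases mod_succ_cases m i with ⟨-, hi'⟩ | ⟨hi, hi'⟩ <;>
    rcases mod_succ_cases m (i + 1) with ⟨-, hi₂⟩ | ⟨hi₁, hi₂⟩ <;>
    rw [add_assoc] at hi₂
  · rw [subpolygon_of_mod_eq rfl, subpolygon_of_mod_eq hi', subpolygon_of_mod_eq hi₂, hi']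
    exact hturn _
  · rw [subpolygon_of_mod_eq (show i % (m + 1) = m - 1 by omega), subpolygon_of_mod_eq hi₁,
      subpolygon_of_mod_eq hi₂, ← Nat.add_sub_assoc (by omega)]
    exact hlast
  · rw [subpolygon_of_mod_eq hi, subpolygon_of_mod_eq hi', subpolygon_of_mod_eq hi₂, hi']
    exact hfirst
  · omega

theorem isGenericLeftTurning_of_diagonal (h : IsGenericLeftTurning n w) (hm : 2 ≤ m) (hmn : m < n)
    (hlast : 0 < det3 (w (k + m - 1)) (w (k + m)) (w k))
    (hfirst : 0 < det3 (w (k + m)) (w k) (w (k + 1)))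
    (hdiag : ∀ j, k < j → j + 1 < k + m →
      Disjoint (arcCone (w (k + m)) (w k)) (arcCone (w j) (w (j + 1)))) :
    IsGenericLeftTurning (m + 1) (subpolygon w k m) where
  pos := m.succ_pos
  periodic i := by rw [subpolygon, Nat.add_mod_right, subpolygon]
  left_turn := subpolygon_left_turn hm h.left_turn hlast hfirst
  disjoint_edges i j hij hij' hij'' := by
    unfold Nat.ModEq at hij hij' hij''
    wlog hlt : i % (m + 1) < j % (m + 1) generalizing i j
    · exact (this j i (Ne.symm hij) (Ne.symm hij'') (Ne.symm hij') (by omega)).symm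
    rcases mod_succ_cases m i with ⟨hi, hi'⟩ | ⟨hi, -⟩ <;>
      rcases mod_succ_cases m j with ⟨hj, hj'⟩ | ⟨hj, hj'⟩
    · rw [subpolygon_of_mod_eq rfl, subpolygon_of_mod_eq hi', subpolygon_of_mod_eq rfl,
        subpolygon_of_mod_eq hj']
      exact h.disjoint_of_lt (by omega) (by omega)
    · rw [subpolygon_of_mod_eq rfl, subpolygon_of_mod_eq hi', subpolygon_of_mod_eq hj,
        subpolygon_of_mod_eq hj']
      exact (hdiag _ (by omega) (by omega)).symm
    · omega
    · omega
  det3_ne_zero_of_not_modEq i j l hij hjl hil := by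
    have hmod {a b : ℕ} (hab : ¬ a ≡ b [MOD m + 1]) :
        ¬ k + a % (m + 1) ≡ k + b % (m + 1) [MOD n] := fun hm =>
      hab (hm.add_left_cancel'.eq_of_lt_of_lt ((Nat.mod_lt a m.succ_pos).trans_le hmn)
        ((Nat.mod_lt b m.succ_pos).trans_le hmn))
    exact h.det3_ne_zero_of_not_modEq _ _ _ (hmod hij) (hmod hjl) (hmod hil)

end Subpolygon

section EmptyCorner

/-- The diagonal from `w 0` to `w k` cuts off from the triangle `w 0, w 1, w 2` a corner at `w 1`
that contains no vertex in its interior; for `k = 2` the corner is the whole triangle. -/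
structure CutsEmptyCorner (n : ℕ) (w : ℕ → E3) (k : ℕ) : Prop where
  two_le : 2 ≤ k
  lt : k < n
  first_pos : 0 < det3 (w 0) (w 1) (w k)
  third_nonneg : 0 ≤ det3 (w 2) (w 0) (w k)
  second_pos : 2 < k → 0 < det3 (w 1) (w 2) (w k)
  empty : ∀ d < n, 0 < det3 (w 0) (w 1) (w d) → 0 < det3 (w 1) (w 2) (w d) →
    det3 (w k) (w 0) (w d) ≤ 0

variable {n k : ℕ} {w : ℕ → E3}

/-- Seen from `w 0`, the vertex `w k` is the one in the triangle `w 0, w 1, w 2` closest in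
direction to `w 1`. -/
theorem exists_cutsEmptyCorner (hn : 2 < n) (hturn : 0 < det3 (w 0) (w 1) (w 2)) :
    ∃ k, CutsEmptyCorner n w k := by
  set inside := (Finset.range n).filter fun d =>
    0 < det3 (w 0) (w 1) (w d) ∧ 0 < det3 (w 1) (w 2) (w d) ∧ 0 < det3 (w 2) (w 0) (w d)
    with hinside
  obtain ⟨k, hk, hmax⟩ := Finset.exists_max_image (insert 2 inside)
    (fun d => det3 (w 2) (w 0) (w d) / det3 (w 0) (w 1) (w d)) (Finset.insert_nonempty _ _)
  have hk' : k = 2 ∨ k < n ∧ 0 < det3 (w 0) (w 1) (w k) ∧ 0 < det3 (w 1) (w 2) (w k) ∧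
      0 < det3 (w 2) (w 0) (w k) := by
    simpa only [hinside, Finset.mem_insert, Finset.mem_filter, Finset.mem_range] using hk
  have h2 : det3 (w 2) (w 0) (w 2) = 0 := det3_self_outer _ _
  have hfirst : 0 < det3 (w 0) (w 1) (w k) := by
    rcases hk' with rfl | hk'
    exacts [hturn, hk'.2.1]
  have hthird : 0 ≤ det3 (w 2) (w 0) (w k) := by
    rcases hk' with rfl | hk'
    exacts [h2.ge, hk'.2.2.2.le]
  have hsecond : k ≠ 2 → 2 < k ∧ k < n ∧ 0 < det3 (w 1) (w 2) (w k) := fun hne => by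
    obtain ⟨hkn, h01, h12, -⟩ := hk'.resolve_left hne
    refine ⟨?_, hkn, h12⟩
    have h0 : k ≠ 0 := by rintro rfl; exact h01.ne' (det3_self_outer _ _)
    have h1 : k ≠ 1 := by rintro rfl; exact h01.ne' (det3_self_right _ _)
    omega
  refine ⟨k, ?_, ?_, hfirst, hthird, fun hk2 => (hsecond hk2.ne').2.2, ?_⟩
  · by_cases hk2 : k = 2
    exacts [hk2.ge, (hsecond hk2).1.le]
  · by_cases hk2 : k = 2
    exacts [hk2 ▸ hn, (hsecond hk2).2.1]
  intro d hd h01 h12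
  refine nonpos_of_mul_nonpos_right ((det3_plucker (w 0) (w 1) (w 2) (w k) (w d)).trans_le ?_) hturn
  rcases le_or_gt (det3 (w 2) (w 0) (w d)) 0 with h20 | h20
  · nlinarith [mul_nonneg hthird h01.le, mul_nonpos_of_nonneg_of_nonpos hfirst.le h20]
  · have hle := hmax d (Finset.mem_insert_of_mem
      (Finset.mem_filter.2 ⟨Finset.mem_range.2 hd, h01, h12, h20⟩))
    rw [div_le_div_iff₀ h01 hfirst] at hle
    linarith

/-- A vertex reached from the corner without crossing the edges at `w 1` lies beyond the diagonal:
otherwise the corner would contain it. -/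
theorem CutsEmptyCorner.det3_nonpos (hk : CutsEmptyCorner n w k)
    (hturn : 0 < det3 (w 0) (w 1) (w 2)) {K : Set E3} (hK : Convex ℝ K) (h0 : 0 ∉ K) {x : E3}
    {d : ℕ} (hd : d < n) (hxK : x ∈ K) (hdK : w d ∈ K) (hx01 : 0 ≤ det3 (w 0) (w 1) x)
    (hx12 : 0 ≤ det3 (w 1) (w 2) x) (hxk : 0 ≤ det3 (w k) (w 0) x)
    (h01 : 0 < det3 (w 0) (w 1) (w d) ∨
      0 < det3 (w 0) (w 1) x ∧ Disjoint K (arcCone (w 0) (w 1)))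
    (h12 : 0 < det3 (w 1) (w 2) (w d) ∨
      0 < det3 (w 1) (w 2) x ∧ Disjoint K (arcCone (w 1) (w 2))) :
    det3 (w k) (w 0) (w d) ≤ 0 := by
  by_contra! hdk
  have hfirst := hk.first_pos
  -- where the arc from `w 1` to `w 2` meets the great circle through `w 0` and `w k`
  set c := det3 (w 2) (w 0) (w k) • w 1 + det3 (w 0) (w 1) (w k) • w 2 with hc
  have hc12 : c ∈ arcCone (w 1) (w 2) :=
    ⟨_, _, hk.third_nonneg, hfirst.le, add_pos_of_nonneg_of_pos hk.third_nonneg hfirst, rfl⟩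
  have h1c (z : E3) : det3 (w 1) c z = det3 (w 0) (w 1) (w k) * det3 (w 1) (w 2) z := by
    rw [← det3_rotate z, hc, det3_combination, det3_self_right, mul_zero, zero_add, det3_rotate z]
  have hc0 (z : E3) : det3 c (w 0) z = det3 (w 0) (w 1) (w 2) * det3 (w k) (w 0) z := by
    rw [det3_plucker, hc]
    simp only [det3, PiLp.add_apply, PiLp.smul_apply, smul_eq_mul]
    ring
  have h01c : 0 < det3 (w 0) (w 1) c := by
    rw [hc, det3_combination, det3_self_right, mul_zero, zero_add]
    exact mul_pos hfirst hturn
  have hmem : w d ∈ leftRegion (triangle (w 0) (w 1) c) := by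
    refine (isLeftTurning_triangle h01c).mem_leftRegion hK h0 hxK hdK
      (forall_triangle_edge (P := fun p q => 0 ≤ det3 p q x) hx01 ?_ ?_)
      (forall_triangle_edge (P := fun p q => 0 < det3 p q (w d) ∨
        0 < det3 p q x ∧ Disjoint K (arcCone p q)) h01 ?_ (Or.inl ?_))
    · rw [h1c]; positivity
    · rw [hc0]; positivity
    · simp only [h1c, mul_pos_iff_of_pos_left hfirst]
      exact h12.imp_right (And.imp_right fun hdisj => hdisj.mono_right (arcCone_subset_of_mem hc12))
    · rw [hc0]; positivity
  have hw01 : 0 < det3 (w 0) (w 1) (w d) := hmem 0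
  have hw12 : 0 < det3 (w 1) c (w d) := hmem 1
  rw [h1c, mul_pos_iff_of_pos_left hfirst] at hw12
  exact hdk.not_ge (hk.empty d hd hw01 hw12)

theorem CutsEmptyCorner.det3_edge_nonpos (hk : CutsEmptyCorner n w k)
    (h : IsSimpleLeftTurning n w) {j d : ℕ} (hj : 2 ≤ j) (hjn : j + 1 < n)
    (hd : d = j ∨ d = j + 1) {z : E3} (hz : z ∈ arcCone (w j) (w (j + 1)))
    (hz01 : 0 < det3 (w 0) (w 1) z) (hz12 : 0 < det3 (w 1) (w 2) z)
    (hzk : 0 ≤ det3 (w k) (w 0) z) : det3 (w k) (w 0) (w d) ≤ 0 := by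
  have hdK : w d ∈ arcCone (w j) (w (j + 1)) := by
    rcases hd with rfl | rfl
    exacts [left_mem_arcCone _ _, right_mem_arcCone _ _]
  have hdisj01 := (h.disjoint_of_lt (i := 0) (by omega) (by omega : j + 1 < 0 + n)).symm
  have hfar (h12 : 0 < det3 (w 1) (w 2) (w d) ∨
      0 < det3 (w 1) (w 2) z ∧ Disjoint (arcCone (w j) (w (j + 1))) (arcCone (w 1) (w 2))) :
      det3 (w k) (w 0) (w d) ≤ 0 :=
    hk.det3_nonpos (h.left_turn 0) (convex_arcCone _ _) (zero_notMem_arcCone (h.left_turn j).ne')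
      (by omega) hz hdK hz01.le hz12.le hzk (.inr ⟨hz01, hdisj01⟩) h12
  rcases hj.eq_or_lt with rfl | hj
  · rcases hd with rfl | rfl
    · rw [det3_swap_left, ← det3_rotate, neg_nonpos]
      exact hk.third_nonneg
    · exact hfar (.inl (h.left_turn 1))
  · exact hfar (.inr ⟨hz12, (h.disjoint_of_lt (i := 1) hj (by omega)).symm⟩)

theorem CutsEmptyCorner.det3_neg_of_nonpos (hk : CutsEmptyCorner n w k)
    (h : IsGenericLeftTurning n w) {d : ℕ} (hd0 : d ≠ 0) (hdn : d < n) (hdk : d ≠ k)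
    (hle : det3 (w k) (w 0) (w d) ≤ 0) : det3 (w k) (w 0) (w d) < 0 :=
  hle.lt_of_ne <| h.det3_ne_zero hk.lt h.pos hdn (by have := hk.two_le; omega) hd0.symm hdk.symm

theorem CutsEmptyCorner.det3_succ_neg (hk : CutsEmptyCorner n w k)
    (h : IsGenericLeftTurning n w) (hkn : k + 1 < n) :
    det3 (w k) (w 0) (w (k + 1)) < 0 := by
  refine hk.det3_neg_of_nonpos h (by omega) hkn (by omega) ?_
  rcases hk.two_le.eq_or_lt with rfl | hk2
  · refine hk.det3_nonpos (h.left_turn 0) (convex_arcCone _ _)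
      (zero_notMem_arcCone (h.left_turn 2).ne') hkn (left_mem_arcCone _ _) (right_mem_arcCone _ _)
      (h.left_turn 0).le (det3_self_right _ _).ge (det3_self_outer _ _).ge
      (.inr ⟨h.left_turn 0, (h.disjoint_of_lt (i := 0) ?_ ?_).symm⟩) (.inl (h.left_turn 1)) <;>
      omega
  · exact hk.det3_edge_nonpos h.toIsSimpleLeftTurning hk.two_le hkn (.inr rfl)
      (left_mem_arcCone _ _) hk.first_pos (hk.second_pos hk2) (det3_self_outer _ _).ge

theorem CutsEmptyCorner.det3_pred_neg {j : ℕ} (hk : CutsEmptyCorner n w (j + 1))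
    (h : IsGenericLeftTurning n w) (hj : 2 ≤ j) : det3 (w (j + 1)) (w 0) (w j) < 0 :=
  hk.det3_neg_of_nonpos h (by omega) (by have := hk.lt; omega) (by omega) <|
    hk.det3_edge_nonpos h.toIsSimpleLeftTurning hj hk.lt (.inl rfl) (right_mem_arcCone _ _)
      hk.first_pos (hk.second_pos (by omega)) (det3_self_outer _ _).ge

theorem CutsEmptyCorner.succ_lt (hk : CutsEmptyCorner n w k) (h : IsGenericLeftTurning n w)
    (hn : 3 < n) : k + 1 < n := by
  refine Nat.lt_of_le_of_ne hk.lt fun hkn => ?_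
  obtain ⟨j, rfl⟩ : ∃ j, k = j + 1 := ⟨k - 1, by omega⟩
  have hturn := h.left_turn j
  rw [show j + 2 = 0 + n by omega, h.periodic, det3_rotate] at hturn
  exact (hk.det3_pred_neg h (by omega)).not_gt hturn

theorem CutsEmptyCorner.det3_last_neg (hk : CutsEmptyCorner n w k)
    (h : IsGenericLeftTurning n w) (hn : 3 < n) : det3 (w k) (w 0) (w (n - 1)) < 0 := by
  have hkn := hk.succ_lt h hn
  have hlast : w (n - 1 + 1) = w 0 := by
    rw [Nat.sub_add_cancel h.pos]
    exact h.periodic.eq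
  have hturn := h.left_turn (n - 1)
  have hdisj := (h.disjoint_of_lt (i := 1) (j := n - 1) (by omega) (by omega)).symm
  have h0 := zero_notMem_arcCone hturn.ne'
  rw [hlast] at hturn hdisj h0
  rw [show n - 1 + 2 = 1 + n by omega, h.periodic, det3_rotate] at hturn
  have h120 : 0 < det3 (w 1) (w 2) (w 0) := by
    rw [← det3_rotate]
    exact h.left_turn 0
  exact hk.det3_neg_of_nonpos h (by omega) (by omega) (by omega) <|
    hk.det3_nonpos (h.left_turn 0) (convex_arcCone _ _) h0 (by omega) (right_mem_arcCone _ _)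
      (left_mem_arcCone _ _) (det3_self_outer _ _).ge h120.le (det3_self_right _ _).ge
      (.inl hturn) (.inr ⟨h120, hdisj⟩)

theorem CutsEmptyCorner.det3_second_pos (hk : CutsEmptyCorner n w k)
    (hturn : 0 < det3 (w 0) (w 1) (w 2)) {α β : ℝ} (hα : 0 ≤ α) (hβ : 0 ≤ β)
    (hpos : 0 < β ∧ 2 < k ∨ 0 < α) : 0 < det3 (w 1) (w 2) (α • w 0 + β • w k) := by
  have hk12 : 0 ≤ det3 (w 1) (w 2) (w k) := by
    rcases hk.two_le.eq_or_lt with rfl | hk2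
    exacts [(det3_self_right _ _).ge, (hk.second_pos hk2).le]
  rw [det3_combination, ← det3_rotate]
  rcases hpos with ⟨hβ, hk2⟩ | hα
  · exact add_pos_of_nonneg_of_pos (by positivity) (mul_pos hβ (hk.second_pos hk2))
  · positivity

theorem CutsEmptyCorner.disjoint_diagonal (hk : CutsEmptyCorner n w k)
    (h : IsGenericLeftTurning n w) {j : ℕ} (hj : 1 ≤ j) (hjn : j + 1 < n) (hjk : j ≠ k)
    (hjk' : j + 1 ≠ k) : Disjoint (arcCone (w 0) (w k)) (arcCone (w j) (w (j + 1))) := by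
  have hk2 := hk.two_le
  have hturn : 0 < det3 (w 0) (w 1) (w 2) := h.left_turn 0
  rw [Set.disjoint_left]
  rintro _ ⟨α, β, hα, hβ, hαβ, rfl⟩ hz
  have h12 := hk.det3_second_pos hturn hα hβ
  rcases hj.eq_or_lt with rfl | hj
  · refine (h12 ?_).ne' ?_
    · rcases hα.eq_or_lt with rfl | hα
      exacts [.inl ⟨by simpa using hαβ, by omega⟩, .inr hα]
    · obtain ⟨γ, δ, -, -, -, hz⟩ := hz
      rw [hz, det3_combination, det3_self_outer, det3_self_right, mul_zero, mul_zero, add_zero]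
  have hβ' : 0 < β := hβ.lt_of_ne' fun hβ0 =>
    Set.disjoint_left.1 (h.disjoint_of_lt (i := 0) (by omega) (by omega))
      ⟨α, 0, hα, le_rfl, by simpa [hβ0] using hαβ, by simp [hβ0]⟩ hz
  have hpos : 0 < β ∧ 2 < k ∨ 0 < α := by
    rcases hk2.eq_or_lt with rfl | hk2
    · exact .inr <| hα.lt_of_ne' fun hα0 =>
        Set.disjoint_left.1 (h.disjoint_of_lt (i := 1) (by omega) (by omega))
          ⟨0, β, le_rfl, hβ, by simpa [hα0] using hαβ, by simp [hα0]⟩ hz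
    · exact .inl ⟨hβ', hk2⟩
  have h01 : 0 < det3 (w 0) (w 1) (α • w 0 + β • w k) := by
    rw [det3_combination, det3_self_outer, mul_zero, zero_add]
    exact mul_pos hβ' hk.first_pos
  have hk0 : det3 (w k) (w 0) (α • w 0 + β • w k) = 0 := by
    rw [det3_combination, det3_self_right, det3_self_outer, mul_zero, mul_zero, add_zero]
  have hneg {d : ℕ} (hd : d = j ∨ d = j + 1) : det3 (w k) (w 0) (w d) < 0 :=
    hk.det3_neg_of_nonpos h (by omega) (by omega) (by omega) <|
      hk.det3_edge_nonpos h.toIsSimpleLeftTurning hj hjn hd hz h01 (h12 hpos) hk0.ge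
  exact (map_neg_of_mem_arcCone (f := leftForm (w k) (w 0)) (hneg (.inl rfl)) (hneg (.inr rfl))
    hz).ne hk0

theorem CutsEmptyCorner.isGenericLeftTurning_subpolygon {m : ℕ} (hk : CutsEmptyCorner n w k)
    (h : IsGenericLeftTurning n w) (hn : 3 < n) (hkm : k + m = n) :
    IsGenericLeftTurning (m + 1) (subpolygon w k m) := by
  have hkn := hk.succ_lt h hn
  have hk2 := hk.two_le
  have hw0 : w (k + m) = w 0 := by
    rw [hkm]
    exact h.periodic.eq
  refine isGenericLeftTurning_of_diagonal h (by omega) (by omega) ?_ ?_ fun j hkj hj => ?_ <;>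
    rw [hw0]
  · rw [hkm, det3_rotate, det3_swap_left, neg_pos]
    exact hk.det3_last_neg h hn
  · rw [det3_swap_left, neg_pos]
    exact hk.det3_succ_neg h hkn
  · exact hk.disjoint_diagonal h (by omega) (by omega) hkj.ne' (by omega)

end EmptyCorner

section Convexity

/-- Every vertex is strictly to the left of every edge that it is not an endpoint of. -/
def IsConvexPolygon (n : ℕ) (w : ℕ → E3) : Prop :=
  ∀ i j, i + 2 ≤ j → j < i + n → 0 < det3 (w i) (w (i + 1)) (w j)

variable {n k : ℕ} {w : ℕ → E3}

theorem CutsEmptyCorner.pred_mem_leftRegion {j m : ℕ} (hk : CutsEmptyCorner n w (j + 1))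
    (h : IsGenericLeftTurning n w) (hn : 3 < n) (hj : 2 ≤ j) (hjm : j + 1 + m = n)
    (hconvex : IsConvexPolygon (m + 1) (subpolygon w (j + 1) m)) :
    w j ∈ leftRegion (subpolygon w (j + 1) m) := by
  have hw0 : w (j + 1 + m) = w 0 := by
    rw [hjm]
    exact h.periodic.eq
  have hkj := hk.det3_pred_neg h hj
  have hconvex_edge {r : ℕ} (hr0 : 0 < r) (hrm : r < m) :
      0 < det3 (w (j + 1 + r)) (w (j + 1 + r + 1)) (w (j + 1)) := by
    have := hconvex r (m + 1) (by omega) (by omega)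
    rwa [subpolygon_of_mod_eq (Nat.mod_eq_of_lt (by omega)),
      subpolygon_of_mod_eq (Nat.mod_eq_of_lt (by omega)),
      subpolygon_of_mod_eq (Nat.mod_self _)] at this
  refine (hk.isGenericLeftTurning_subpolygon h hn hjm).mem_leftRegion
    (convex_arcCone (w j) (w (j + 1))) (zero_notMem_arcCone (h.left_turn j).ne')
    (right_mem_arcCone _ _) (left_mem_arcCone _ _)
    (forall_subpolygon_edge (P := fun p q => 0 ≤ det3 p q (w (j + 1))) (fun r hr => ?_)
      (det3_self_right _ _).ge)
    (forall_subpolygon_edge (P := fun p q => 0 < det3 p q (w j) ∨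
      0 < det3 p q (w (j + 1)) ∧ Disjoint (arcCone (w j) (w (j + 1))) (arcCone p q))
      (fun r hr => ?_) (.inl ?_))
  · rcases r.eq_zero_or_pos with rfl | hr0
    exacts [(det3_self_outer _ _).ge, (hconvex_edge hr0 hr).le]
  · rcases r.eq_zero_or_pos with rfl | hr0
    · left
      rw [← det3_rotate]
      exact h.left_turn j
    · exact .inr ⟨hconvex_edge hr0 hr, h.disjoint_of_lt (by omega) (by omega)⟩
  · rwa [hw0, det3_swap_left, neg_pos]

/-- Otherwise the boundary path from `w k` back to `w 1` would be trapped to the left of the convex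
polygon beyond the diagonal, whereas `w 1` is on the other side of the diagonal. -/
theorem CutsEmptyCorner.eq_two {m : ℕ} (hk : CutsEmptyCorner n w k)
    (h : IsGenericLeftTurning n w) (hn : 3 < n) (hkm : k + m = n)
    (hconvex : IsConvexPolygon (m + 1) (subpolygon w k m)) : k = 2 := by
  by_contra hk2
  replace hk2 : 2 < k := lt_of_le_of_ne' hk.two_le hk2
  obtain ⟨j, rfl⟩ : ∃ j, k = j + 1 := ⟨k - 1, by omega⟩
  have hkn := hk.succ_lt h hn
  have hw0 : w (j + 1 + m) = w 0 := by
    rw [hkm]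
    exact h.periodic.eq
  have hpoly := hk.isGenericLeftTurning_subpolygon h hn hkm
  have hwalk : w 1 ∈ leftRegion (subpolygon w (j + 1) m) := by
    refine Nat.decreasingInduction' (P := fun s => w s ∈ leftRegion (subpolygon w (j + 1) m))
      (fun s hsj hs hmem => ?_) (by omega : 1 ≤ j)
      (hk.pred_mem_leftRegion h hn (by omega) hkm hconvex)
    refine hpoly.mem_leftRegion (convex_arcCone (w s) (w (s + 1)))
      (zero_notMem_arcCone (h.left_turn s).ne') (right_mem_arcCone _ _) (left_mem_arcCone _ _)
      (fun i => (hmem i).le) fun i => .inr ⟨hmem i, ?_⟩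
    refine forall_subpolygon_edge (P := fun p q => Disjoint _ (arcCone p q)) (fun r hr => ?_) ?_ i
    · exact h.disjoint_of_lt (by omega) (by omega)
    · rw [hw0]
      exact (hk.disjoint_diagonal h hs (by omega) (by omega) (by omega)).symm
  have h1 : 0 < det3 (subpolygon w (j + 1) m m) (subpolygon w (j + 1) m (m + 1)) (w 1) := hwalk m
  rw [subpolygon_of_mod_eq (Nat.mod_eq_of_lt m.lt_succ_self),
    subpolygon_of_mod_eq (Nat.mod_self _), hw0, det3_swap_right, neg_pos] at h1
  exact h1.not_gt hk.first_pos

theorem IsGenericLeftTurning.isConvexPolygon (h : IsGenericLeftTurning n w) :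
    IsConvexPolygon n w := by
  induction n using Nat.strong_induction_on generalizing w with
  | _ n ih =>
    suffices hzero : ∀ {w : ℕ → E3}, IsGenericLeftTurning n w → ∀ j, 2 ≤ j → j < n →
        0 < det3 (w 0) (w 1) (w j) by
      intro i j hij hjn
      have := hzero (h.shift i) (j - i) (by omega) (by omega)
      simpa only [zero_add, add_comm 1 i, Nat.sub_add_cancel (show i ≤ j by omega)] using this
    intro w h j hj hjn
    rcases hj.eq_or_lt with rfl | hj
    · exact h.left_turn 0
    obtain ⟨d, rfl⟩ : ∃ d, j = 2 + d + 1 := ⟨j - 3, by omega⟩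
    have h1 := h.shift 1
    obtain ⟨k, hk⟩ :=
      exists_cutsEmptyCorner (n := n) (w := fun j => w (j + 1)) (by omega) (h1.left_turn 0)
    obtain ⟨m, hkm⟩ := Nat.exists_eq_add_of_le hk.lt.le
    have hconvex := ih (m + 1) (by have := hk.two_le; omega)
      (hk.isGenericLeftTurning_subpolygon h1 (by omega) hkm.symm)
    obtain rfl := hk.eq_two h1 (by omega) hkm.symm hconvex
    have hpos := hconvex (m - 1) (m + 1 + d) (by omega) (by omega)
    rwa [Nat.sub_add_cancel (by omega), subpolygon_of_mod_eq (Nat.mod_eq_of_lt (by omega)),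
      subpolygon_of_mod_eq (Nat.mod_eq_of_lt (by omega)),
      subpolygon_of_mod_eq (Nat.add_mod_left _ _), Nat.mod_eq_of_lt (by omega),
      show 2 + (m - 1) + 1 = 0 + n by omega, show 2 + m + 1 = 1 + n by omega, h.periodic,
      h.periodic] at hpos

end Convexity

section Perturbation

open Filter Topology

theorem continuous_det3 {X : Type*} [TopologicalSpace X] {a b c : X → E3} (ha : Continuous a)
    (hb : Continuous b) (hc : Continuous c) : Continuous fun x => det3 (a x) (b x) (c x) := by
  unfold det3; fun_prop

theorem eventually_det3_add_smul_ne_zero {a' b' c' : E3} (h : det3 a' b' c' ≠ 0) (a b c : E3) :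
    ∀ᶠ ε in 𝓝[≠] (0 : ℝ), det3 (a + ε • a') (b + ε • b') (c + ε • c') ≠ 0 := by
  set cubic : Cubic ℝ := ⟨det3 a' b' c', det3 a b' c' + det3 a' b c' + det3 a' b' c,
    det3 a b c' + det3 a b' c + det3 a' b c, det3 a b c⟩ with hcubic
  have hfinite := Polynomial.finite_setOfPred_isRoot (cubic.ne_zero_of_a_ne_zero h)
  filter_upwards [nhdsNE_le_cofinite 0 hfinite.compl_mem_cofinite] with ε hε hzero
  refine hε ?_
  rw [Set.mem_ofPred_eq, Polynomial.IsRoot.def, ← hzero, Cubic.toPoly, hcubic]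
  simp only [det3, Polynomial.eval_add, Polynomial.eval_mul, Polynomial.eval_C,
    Polynomial.eval_pow, Polynomial.eval_X, PiLp.add_apply, PiLp.smul_apply, smul_eq_mul]
  ring

theorem eventually_disjoint_arcCone {X E : Type*} [TopologicalSpace X] [AddCommGroup E]
    [Module ℝ E] [TopologicalSpace E] [IsTopologicalAddGroup E] [ContinuousSMul ℝ E] [T1Space E]
    {p q r s : X → E} (hp : Continuous p) (hq : Continuous q) (hr : Continuous r)
    (hs : Continuous s) {x₀ : X} (hpq : 0 ∉ arcCone (p x₀) (q x₀))
    (hrs : 0 ∉ arcCone (r x₀) (s x₀))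
    (hd : Disjoint (arcCone (p x₀) (q x₀)) (arcCone (r x₀) (s x₀))) :
    ∀ᶠ x in 𝓝 x₀, Disjoint (arcCone (p x) (q x)) (arcCone (r x) (s x)) := by
  set gap : X → (Fin 4 → ℝ) → E := fun x c => c 0 • p x + c 1 • q x - (c 2 • r x + c 3 • s x)
    with hgap
  have hcont : Continuous fun z : X × (Fin 4 → ℝ) => gap z.1 z.2 := by
    fun_prop
  have hgap₀ : ∀ c ∈ stdSimplex ℝ (Fin 4), gap x₀ c ≠ 0 := by
    rintro c ⟨hc, hsum⟩ hzero
    rw [Fin.sum_univ_four] at hsum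
    have heq : c 0 • p x₀ + c 1 • q x₀ = c 2 • r x₀ + c 3 • s x₀ := sub_eq_zero.1 hzero
    rcases (add_nonneg (hc 0) (hc 1)).eq_or_lt with h01 | h01
    · have h0 : c 0 = 0 := by linarith [hc 0, hc 1]
      have h1 : c 1 = 0 := by linarith [hc 0, hc 1]
      exact hrs ⟨c 2, c 3, hc 2, hc 3, by linarith, by simpa [h0, h1] using heq⟩
    rcases (add_nonneg (hc 2) (hc 3)).eq_or_lt with h23 | h23
    · have h2 : c 2 = 0 := by linarith [hc 2, hc 3]
      have h3 : c 3 = 0 := by linarith [hc 2, hc 3]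
      exact hpq ⟨c 0, c 1, hc 0, hc 1, h01, by simpa [h2, h3] using heq.symm⟩
    exact Set.disjoint_left.1 hd ⟨c 0, c 1, hc 0, hc 1, h01, rfl⟩
      ⟨c 2, c 3, hc 2, hc 3, h23, heq⟩
  have hnear := (isCompact_stdSimplex ℝ (Fin 4)).eventually_forall_of_forall_eventually
    (x₀ := x₀) (P := fun x c => gap x c ≠ 0) fun c hc =>
      hcont.continuousAt.eventually_ne (hgap₀ c hc)
  filter_upwards [hnear] with x hx
  rw [Set.disjoint_left]
  rintro _ ⟨α, β, hα, hβ, hαβ, rfl⟩ ⟨γ, δ, hγ, hδ, hγδ, heq⟩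
  have htotal : 0 < α + β + γ + δ := by linarith
  refine hx ((α + β + γ + δ)⁻¹ • ![α, β, γ, δ]) ⟨fun i => ?_, ?_⟩ ?_
  · refine mul_nonneg (inv_nonneg.2 htotal.le) ?_
    fin_cases i <;> assumption
  · simp only [Pi.smul_apply, smul_eq_mul, ← Finset.mul_sum, Fin.sum_univ_four]
    exact inv_mul_cancel₀ htotal.ne'
  · simp only [hgap, Pi.smul_apply, smul_assoc, ← smul_add, ← smul_sub]
    exact (congrArg _ (sub_eq_zero.2 heq)).trans (smul_zero _)

theorem eventually_forall_of_periodic {X : Type*} {l : Filter X} {P : X → ℕ → Prop} {n : ℕ}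
    (hn : 0 < n) (hP : ∀ x, Function.Periodic (P x) n) (h : ∀ i, ∀ᶠ x in l, P x i) :
    ∀ᶠ x in l, ∀ i, P x i := by
  filter_upwards [(eventually_all_finset (Finset.range n)).2 fun i _ => h i] with x hx i
  rw [← (hP x).map_mod_nat]
  exact hx _ (Finset.mem_range.2 (Nat.mod_lt _ hn))

/-- The point with parameter `t` on the moment curve; any three distinct points of this curve are
linearly independent. -/
def momentCurve (t : ℝ) : E3 :=
  !₂[1, t, t ^ 2]

theorem det3_momentCurve (r s t : ℝ) :
    det3 (momentCurve r) (momentCurve s) (momentCurve t) = (s - r) * (t - r) * (t - s) := by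
  simp [det3, momentCurve]
  ring

/-- The polygon obtained from an `n`-gon `w` by moving its vertices in the directions of distinct
points of the moment curve. -/
def perturb (n : ℕ) (w : ℕ → E3) (ε : ℝ) (i : ℕ) : E3 :=
  w i + ε • momentCurve (i % n : ℕ)

variable {n : ℕ} {w : ℕ → E3}

theorem perturb_zero (n : ℕ) (w : ℕ → E3) (i : ℕ) : perturb n w 0 i = w i := by
  rw [perturb, zero_smul, add_zero]

theorem continuous_perturb (n : ℕ) (w : ℕ → E3) (i : ℕ) :
    Continuous fun ε => perturb n w ε i := by
  unfold perturb; fun_prop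

theorem periodic_perturb (h : Function.Periodic w n) (ε : ℝ) :
    Function.Periodic (perturb n w ε) n := fun i => by
  rw [perturb, h, Nat.add_mod_right, perturb]

theorem eventually_perturb_left_turn (h : IsLeftTurning n w) : ∀ᶠ ε in 𝓝 0, ∀ i,
    0 < det3 (perturb n w ε i) (perturb n w ε (i + 1)) (perturb n w ε (i + 2)) := by
  refine eventually_forall_of_periodic h.pos (fun ε i => ?_) fun i => ?_
  · simp only [add_right_comm i n, periodic_perturb h.periodic _ _]
  · refine ((continuous_det3 (continuous_perturb n w _) (continuous_perturb n w _)
      (continuous_perturb n w _)).continuousAt).eventually_const_lt ?_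
    simpa only [perturb_zero] using h.left_turn i

theorem eventually_perturb_disjoint_edges (h : IsSimpleLeftTurning n w) : ∀ᶠ ε in 𝓝 0, ∀ i j,
    ¬ i ≡ j [MOD n] → ¬ i + 1 ≡ j [MOD n] → ¬ i ≡ j + 1 [MOD n] →
      Disjoint (arcCone (perturb n w ε i) (perturb n w ε (i + 1)))
        (arcCone (perturb n w ε j) (perturb n w ε (j + 1))) := by
  refine eventually_forall_of_periodic h.pos (fun ε i => ?_) fun i =>
    eventually_forall_of_periodic h.pos (fun ε j => ?_) fun j => ?_
  · simp only [Nat.ModEq, add_right_comm i n, Nat.add_mod_right, periodic_perturb h.periodic _ _]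
  · simp only [Nat.ModEq, add_right_comm j n, Nat.add_mod_right, periodic_perturb h.periodic _ _]
  · simp only [eventually_imp_distrib_left]
    intro hij hij' hij''
    refine eventually_disjoint_arcCone (continuous_perturb n w _) (continuous_perturb n w _)
      (continuous_perturb n w _) (continuous_perturb n w _) ?_ ?_ ?_ <;>
      simp only [perturb_zero]
    exacts [zero_notMem_arcCone (h.left_turn i).ne', zero_notMem_arcCone (h.left_turn j).ne',
      h.disjoint_edges i j hij hij' hij'']

theorem eventually_perturb_det3_ne_zero (hn : 0 < n) (h : Function.Periodic w n) :
    ∀ᶠ ε in 𝓝[≠] 0, ∀ i j k, ¬ i ≡ j [MOD n] → ¬ j ≡ k [MOD n] → ¬ i ≡ k [MOD n] →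
      det3 (perturb n w ε i) (perturb n w ε j) (perturb n w ε k) ≠ 0 := by
  refine eventually_forall_of_periodic hn (fun ε i => ?_) fun i =>
    eventually_forall_of_periodic hn (fun ε j => ?_) fun j =>
      eventually_forall_of_periodic hn (fun ε k => ?_) fun k => ?_
  · simp only [Nat.ModEq, Nat.add_mod_right, periodic_perturb h _ _]
  · simp only [Nat.ModEq, Nat.add_mod_right, periodic_perturb h _ _]
  · simp only [Nat.ModEq, Nat.add_mod_right, periodic_perturb h _ _]
  simp only [eventually_imp_distrib_left]
  intro hij hjk hik
  refine eventually_det3_add_smul_ne_zero ?_ _ _ _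
  rw [det3_momentCurve]
  unfold Nat.ModEq at hij hjk hik
  simp only [ne_eq, mul_eq_zero, sub_eq_zero, Nat.cast_inj]
  tauto

theorem IsSimpleLeftTurning.eventually_perturb (h : IsSimpleLeftTurning n w) :
    ∀ᶠ ε in 𝓝[≠] 0, IsGenericLeftTurning n (perturb n w ε) := by
  filter_upwards [nhdsWithin_le_nhds (eventually_perturb_left_turn h.toIsLeftTurning),
    nhdsWithin_le_nhds (eventually_perturb_disjoint_edges h),
    eventually_perturb_det3_ne_zero h.pos h.periodic] with ε hturn hdisj hne
  exact ⟨⟨⟨h.pos, periodic_perturb h.periodic ε, hturn⟩, hdisj⟩, hne⟩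

theorem IsSimpleLeftTurning.det3_nonneg (h : IsSimpleLeftTurning n w) {i j : ℕ} (hij : i + 2 ≤ j)
    (hjn : j < i + n) : 0 ≤ det3 (w i) (w (i + 1)) (w j) := by
  have hlim : Tendsto
      (fun ε => det3 (perturb n w ε i) (perturb n w ε (i + 1)) (perturb n w ε j)) (𝓝[≠] 0)
      (𝓝 (det3 (w i) (w (i + 1)) (w j))) := by
    have hcont := (continuous_det3 (continuous_perturb n w i) (continuous_perturb n w (i + 1))
      (continuous_perturb n w j)).tendsto 0
    simp only [perturb_zero] at hcont
    exact hcont.mono_left nhdsWithin_le_nhds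
  refine ge_of_tendsto hlim ?_
  filter_upwards [h.eventually_perturb] with ε hε
  exact (hε.isConvexPolygon i j hij hjn).le

end Perturbation

section Hemisphere

theorem disjoint_arcCone_of_disjoint_arcSeg {p q r s : E3}
    (h : Disjoint (arcSeg p q) (arcSeg r s)) : Disjoint (arcCone p q) (arcCone r s) := by
  have hnorm {p q z : E3} (hz : z ∈ arcCone p q) : ‖z‖⁻¹ • z ∈ arcSeg p q := by
    obtain ⟨α, β, hα, hβ, hαβ, rfl⟩ := hz
    exact ⟨α, β, hα, hβ, hαβ, rfl⟩
  exact Set.disjoint_left.2 fun z hpq hrs => Set.disjoint_left.1 h (hnorm hpq) (hnorm hrs)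

theorem map_nonneg_of_mem_arcSeg {f : E3 →ₗ[ℝ] ℝ} {p q x : E3} (hp : 0 ≤ f p) (hq : 0 ≤ f q)
    (hx : x ∈ arcSeg p q) : 0 ≤ f x := by
  obtain ⟨α, β, hα, hβ, -, rfl⟩ := hx
  simp only [map_smul, map_add, smul_eq_mul]
  positivity

theorem exists_unit_inner_nonneg {E : Type*} [NormedAddCommGroup E] [InnerProductSpace ℝ E]
    [FiniteDimensional ℝ E] {f : E →ₗ[ℝ] ℝ} (hf : f ≠ 0) :
    ∃ u : E, ‖u‖ = 1 ∧ ∀ x, 0 ≤ f x → 0 ≤ ⟪x, u⟫ := by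
  have := FiniteDimensional.complete ℝ E
  set c := (InnerProductSpace.toDual ℝ E).symm f.toContinuousLinearMap with hc
  have hinner (x : E) : ⟪x, c⟫ = f x := by
    rw [real_inner_comm, hc, InnerProductSpace.toDual_symm_apply,
      LinearMap.coe_toContinuousLinearMap']
  have hc0 : c ≠ 0 := by
    intro h0
    refine hf (LinearMap.ext fun x => ?_)
    rw [← hinner, h0, inner_zero_right, LinearMap.zero_apply]
  refine ⟨‖c‖⁻¹ • c, norm_smul_inv_norm hc0, fun x hx => ?_⟩
  rw [inner_smul_right, hinner]
  positivity

theorem isSimpleLeftTurning_ofNat {n : ℕ} [NeZero n] {v : Fin n → E3}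
    (hangle : ∀ i, 0 < det3 (v (i - 1)) (v i) (v (i + 1)))
    (hdisj : ∀ i j, j ≠ i → j ≠ i + 1 → i ≠ j + 1 →
      Disjoint (arcSeg (v i) (v (i + 1))) (arcSeg (v j) (v (j + 1)))) :
    IsSimpleLeftTurning n fun i => v (Fin.ofNat n i) := by
  have hsucc (i : ℕ) : Fin.ofNat n (i + 1) = Fin.ofNat n i + 1 := by
    ext
    simp [Fin.val_add]
  have hmod {i j : ℕ} (hij : ¬ i ≡ j [MOD n]) : Fin.ofNat n i ≠ Fin.ofNat n j := fun heq =>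
    hij (congrArg Fin.val heq)
  refine ⟨⟨NeZero.pos n, fun i => ?_, fun i => ?_⟩, fun i j hij hij' hij'' => ?_⟩
  · exact congrArg v (Fin.ext (Nat.add_mod_right i n))
  · have hturn := hangle (Fin.ofNat n (i + 1))
    rwa [hsucc, add_sub_cancel_right, ← hsucc, ← hsucc] at hturn
  · rw [hsucc, hsucc]
    refine disjoint_arcCone_of_disjoint_arcSeg (hdisj _ _ (hmod hij).symm ?_ ?_)
    · rw [← hsucc]
      exact (hmod hij').symm
    · rw [← hsucc]
      exact hmod hij''

end Hemisphere

/-- Every spherical polygon (closed piecewise-geodesic curve with positive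
length geodesic edges) without self-intersection, all of whose interior
angles (measured on the left) are strictly less than `π`, is contained in a
closed hemisphere. -/
theorem statement4 (m : ℕ) (v : Fin (m + 3) → E3)
    (hunit : ∀ i, ‖v i‖ = 1)
    -- all interior angles, measured on the left side, are strictly less than π
    (hangle : ∀ i : Fin (m + 3), 0 < det3 (v (i - 1)) (v i) (v (i + 1)))
    -- adjacent edges meet exactly in their common vertex
    (hadj : ∀ i : Fin (m + 3),
      arcSeg (v i) (v (i + 1)) ∩ arcSeg (v (i + 1)) (v (i + 2)) = {v (i + 1)})
    -- non-adjacent edges are disjoint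
    (hdisj : ∀ i j : Fin (m + 3), j ≠ i → j ≠ i + 1 → i ≠ j + 1 →
      Disjoint (arcSeg (v i) (v (i + 1))) (arcSeg (v j) (v (j + 1)))) :
    ∃ u : E3, ‖u‖ = 1 ∧
      ∀ i : Fin (m + 3), ∀ x ∈ arcSeg (v i) (v (i + 1)), 0 ≤ ⟪x, u⟫ := by
  have hpoly := isSimpleLeftTurning_ofNat hangle hdisj
  set w : ℕ → E3 := fun i => v (Fin.ofNat (m + 3) i)
  have hvertex (i : Fin (m + 3)) : 0 ≤ leftForm (w 0) (w 1) (v i) := by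
    have hwi : w i = v i := congrArg v (Fin.ext (Nat.mod_eq_of_lt i.isLt))
    rw [← hwi, leftForm_apply]
    rcases (by omega : i.val = 0 ∨ i.val = 1 ∨ 2 ≤ i.val) with h | h | h
    · rw [h, det3_self_outer]
    · rw [h, det3_self_right]
    · exact hpoly.det3_nonneg h (by omega)
  have hform : leftForm (w 0) (w 1) ≠ 0 := fun h =>
    (hpoly.left_turn 0).ne' (DFunLike.congr_fun h (w 2))
  obtain ⟨u, hu, hu_nonneg⟩ := exists_unit_inner_nonneg hform
  exact ⟨u, hu, fun i x hx =>
    hu_nonneg x (map_nonneg_of_mem_arcSeg (hvertex i) (hvertex (i + 1)) hx)⟩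
end
end

section
/- A spherical quadrilateral (possibly nonconvex and self-intersecting) with all four edge lengths in (0, π) and all four interior angles not equal to 0, π, or 2π is uniquely determined up to isometry of the sphere by its four interior angles together with one edge length. -/
noncomputable section
open Real
open scoped RealInnerProductSpace

/-- The initial tangent direction at `x` of the (short) geodesic arc from `x`
toward `y`. -/
def tdir (x y : E3) : E3 := y - ⟪y, x⟫ • x

/-- The interior angle at the vertex `x` of a spherical polygon with previous
vertex `p` and next vertex `q`, measured in `[0, 2π]` with respect to a fixed
coorientation (the left side of the polygon): it is the unoriented angle
`sangle p x q` when `p` is reached from `q` by a left turn at `x`, and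
`2π - sangle p x q` otherwise. -/
def iangle (p x q : E3) : ℝ :=
  if 0 ≤ det3 x (tdir x q) (tdir x p) then sangle p x q
  else 2 * π - sangle p x q

/-!
Pass to the polar dual: the poles `n i` of the sides of a quadrilateral satisfy
`⟪n i, n (i + 1)⟫ = -cos θ` and `n i × n (i + 1) = sin θ • v (i + 1)`, where `θ` is the interior
angle at `v (i + 1)`. A rotation moves the side of known length into place; this side and the angles
at its ends determine the poles of the two adjacent sides. The dual law of cosines then gives the
length of the opposite side. The pole of that side has known inner products with the two adjacent
poles and a known triple product with them, so it is determined as well, and the two remaining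
vertices are recovered from the cross products of consecutive poles.
-/

section Isometry

variable {𝕜 E F ι : Type*} [RCLike 𝕜] [NormedAddCommGroup E] [InnerProductSpace 𝕜 E]
  [NormedAddCommGroup F] [InnerProductSpace 𝕜 F]

theorem exists_linearIsometryEquiv_of_inner_basis_eq (A : Module.Basis ι 𝕜 E)
    (B : Module.Basis ι 𝕜 F) (h : ∀ i j, inner 𝕜 (A i) (A j) = inner 𝕜 (B i) (B j)) :
    ∃ g : E ≃ₗᵢ[𝕜] F, ∀ i, g (A i) = B i := by
  let f : E ≃ₗ[𝕜] F := A.equiv B (Equiv.refl ι)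
  have f_apply (i : ι) : f (A i) = B i := A.equiv_apply i B (Equiv.refl ι)
  have inner_f : ((innerₛₗ 𝕜).comp f.toLinearMap).compl₂ f.toLinearMap = innerₛₗ 𝕜 :=
    LinearMap.ext_basis A A fun i j ↦ by
      simp only [LinearMap.compl₂_apply, LinearMap.comp_apply, LinearEquiv.coe_coe, f_apply,
        innerₛₗ_apply_apply, h]
  exact ⟨f.isometryOfInner fun x y ↦ LinearMap.congr_fun₂ inner_f x y, f_apply⟩

end Isometry

section CrossProduct

/-- The cross product `u × v`, transported from `Fin 3 → ℝ` to Euclidean space and bundled as a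
bilinear map. -/
def cross : E3 →ₗ[ℝ] E3 →ₗ[ℝ] E3 :=
  (crossProduct.compl₁₂ (WithLp.linearEquiv 2 ℝ (Fin 3 → ℝ)).toLinearMap
    (WithLp.linearEquiv 2 ℝ (Fin 3 → ℝ)).toLinearMap).compr₂
    (WithLp.linearEquiv 2 ℝ (Fin 3 → ℝ)).symm.toLinearMap

variable (u v w x : E3)

theorem cross_eq_toLp : cross u v = WithLp.toLp 2 (crossProduct u.ofLp v.ofLp) := rfl

theorem inner_eq_dotProduct : ⟪u, v⟫ = u.ofLp ⬝ᵥ v.ofLp := by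
  rw [EuclideanSpace.inner_eq_star_dotProduct, star_trivial, dotProduct_comm]

theorem neg_cross_comm : -cross u v = cross v u := by
  simp only [cross_eq_toLp, ← WithLp.toLp_neg, cross_anticomm]

theorem cross_self_eq_zero : cross u u = 0 := by
  simp only [cross_eq_toLp, cross_self, WithLp.toLp_zero]

theorem cross_cross_left : cross (cross u v) w = ⟪u, w⟫ • v - ⟪v, w⟫ • u := by
  simp only [cross_eq_toLp, cross_cross_eq_smul_sub_smul, inner_eq_dotProduct, WithLp.toLp_sub,
    WithLp.toLp_smul, WithLp.toLp_ofLp]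

theorem inner_self_cross : ⟪u, cross u v⟫ = 0 := by
  rw [cross_eq_toLp, inner_eq_dotProduct, dot_self_cross]

theorem inner_cross_self : ⟪v, cross u v⟫ = 0 := by
  rw [cross_eq_toLp, inner_eq_dotProduct, dot_cross_self]

theorem inner_cross_cross :
    ⟪cross u v, cross w x⟫ = ⟪u, w⟫ * ⟪v, x⟫ - ⟪u, x⟫ * ⟪v, w⟫ := by
  simp only [cross_eq_toLp, inner_eq_dotProduct, cross_dot_cross]

theorem norm_cross : ‖cross u v‖ = ‖u‖ * ‖v‖ * sin (InnerProductGeometry.angle u v) :=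
  InnerProductGeometry.norm_ofLp_crossProduct u v

theorem det3_eq_inner_cross : det3 u v w = ⟪u, cross v w⟫ := by
  simp only [det3, cross_eq_toLp, inner_eq_dotProduct, cross_apply, Matrix.vec3_dotProduct,
    Matrix.cons_val]
  ring

theorem inner_cross_left : ⟪cross u v, w⟫ = det3 u v w := by
  rw [real_inner_comm, det3_eq_inner_cross, cross_eq_toLp, cross_eq_toLp, inner_eq_dotProduct,
    inner_eq_dotProduct, triple_product_permutation]

theorem det3_cross_right : det3 u v (cross u v) = ‖cross u v‖ ^ 2 := by
  rw [← inner_cross_left, real_inner_self_eq_norm_sq]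

theorem det3_eq_det : det3 u v w = (EuclideanSpace.basisFun (Fin 3) ℝ).toBasis.det ![u, v, w] := by
  rw [det3_eq_inner_cross, cross_eq_toLp, inner_eq_dotProduct, triple_product_eq_det,
    Module.Basis.det_apply, ← Matrix.det_transpose]
  congr
  ext i j
  fin_cases i <;> rfl

theorem det3_map (f : E3 →ₗ[ℝ] E3) :
    det3 (f u) (f v) (f w) = LinearMap.det f * det3 u v w := by
  rw [det3_eq_det, det3_eq_det, ← Module.Basis.det_comp]
  congr
  ext i
  fin_cases i <;> rfl

variable {u v w x}

theorem exists_basis_of_det3_ne_zero (h : det3 u v w ≠ 0) :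
    ∃ A : Module.Basis (Fin 3) ℝ E3, ⇑A = ![u, v, w] := by
  rw [det3_eq_det, ← isUnit_iff_ne_zero, ← Module.Basis.is_basis_iff_det] at h
  exact ⟨Module.Basis.mk h.1 h.2.ge, Module.Basis.coe_mk _ _⟩

theorem eq_of_inner_eq_of_cross_eq (hu : u ≠ 0) (hinner : ⟪u, v⟫ = ⟪u, w⟫)
    (hcross : cross u v = cross u w) : v = w := by
  have h : cross (cross u v) u = cross (cross u w) u := by rw [hcross]
  simp only [cross_cross_left, real_inner_comm u, hinner, sub_left_inj] at h
  exact smul_right_injective E3 (inner_self_ne_zero.2 hu) h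

theorem cross_eq_det3_smul (hx : ‖x‖ = 1) (hu : ⟪x, u⟫ = 0) (hv : ⟪x, v⟫ = 0) :
    cross u v = det3 x u v • x := by
  refine eq_of_inner_eq_of_cross_eq (u := x) (norm_ne_zero_iff.1 (hx.trans_ne one_ne_zero)) ?_ ?_
  · rw [real_inner_smul_right, real_inner_self_eq_norm_sq, hx, det3_eq_inner_cross, one_pow,
      mul_one]
  · rw [← neg_cross_comm, cross_cross_left, map_smul, cross_self_eq_zero, real_inner_comm, hu,
      real_inner_comm, hv]
    simp only [zero_smul, sub_zero, neg_zero, smul_zero]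

theorem eq_of_inner_eq_of_det3_eq (hne : det3 u v x ≠ 0) (hleft : ⟪u, v⟫ = ⟪u, w⟫)
    (hright : ⟪v, x⟫ = ⟪w, x⟫) (hdet : det3 u v x = det3 u w x) : v = w := by
  have inner_eq_det3 (y : E3) : ⟪cross x u, y⟫ = det3 u y x := by
    rw [inner_cross_left]; unfold det3; ring
  refine eq_of_inner_eq_of_cross_eq (u := cross x u) ?_ ?_ ?_
  · intro h
    rw [← inner_eq_det3, h, inner_zero_left] at hne
    exact hne rfl
  · rw [inner_eq_det3, inner_eq_det3, hdet]
  · rw [cross_cross_left, cross_cross_left, hleft, real_inner_comm, hright, real_inner_comm]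

end CrossProduct

section Angle

variable (p x q : E3)

theorem cross_tdir_right : cross x (tdir x q) = cross x q := by
  rw [tdir, map_sub, map_smul, cross_self_eq_zero, smul_zero, sub_zero]

theorem cross_tdir_left : cross (tdir x p) x = cross p x := by
  rw [← neg_cross_comm, cross_tdir_right, neg_cross_comm]

theorem cos_iangle : cos (iangle p x q) = cos (sangle p x q) := by
  unfold iangle
  split_ifs
  · rfl
  · exact cos_two_pi_sub _

theorem cos_iangle_mul_norm_mul_norm :
    cos (iangle p x q) * (‖tdir x p‖ * ‖tdir x q‖) = ⟪tdir x p, tdir x q⟫ := by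
  rw [cos_iangle]
  exact InnerProductGeometry.cos_angle_mul_norm_mul_norm _ _

theorem iangle_mem_Icc : iangle p x q ∈ Set.Icc 0 (2 * π) := by
  have h₀ : 0 ≤ sangle p x q := InnerProductGeometry.angle_nonneg _ _
  have hπ : sangle p x q ≤ π := InnerProductGeometry.angle_le_pi _ _
  unfold iangle
  split_ifs <;> constructor <;> linarith

variable {p x q}

theorem sin_ne_zero_of_mem_Icc {θ : ℝ} (hθ : θ ∈ Set.Icc 0 (2 * π))
    (hne : θ ∉ ({0, π, 2 * π} : Set ℝ)) : sin θ ≠ 0 := by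
  simp only [Set.mem_insert_iff, Set.mem_singleton_iff, not_or] at hne
  obtain ⟨hne₀, hneπ, hne₂⟩ := hne
  rcases lt_or_gt_of_ne hneπ with h | h
  · exact (sin_pos_of_pos_of_lt_pi (lt_of_le_of_ne' hθ.1 hne₀) h).ne'
  · rw [← sin_sub_two_pi]
    have := lt_of_le_of_ne hθ.2 hne₂
    exact (sin_neg_of_neg_of_neg_pi_lt (by linarith) (by linarith)).ne

theorem sin_iangle_ne_zero (h : iangle p x q ∉ ({0, π, 2 * π} : Set ℝ)) :
    sin (iangle p x q) ≠ 0 :=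
  sin_ne_zero_of_mem_Icc (iangle_mem_Icc p x q) h

theorem inner_self_tdir (hx : ‖x‖ = 1) : ⟪x, tdir x q⟫ = 0 := by
  rw [tdir, inner_sub_right, real_inner_smul_right, real_inner_self_eq_norm_sq, hx,
    real_inner_comm x q]
  ring

theorem norm_cross_eq_norm_tdir (hx : ‖x‖ = 1) : ‖cross x q‖ = ‖tdir x q‖ := by
  rw [← cross_tdir_right, norm_cross, hx,
    InnerProductGeometry.inner_eq_zero_iff_angle_eq_pi_div_two _ _ |>.1 (inner_self_tdir hx),
    sin_pi_div_two, one_mul, mul_one]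

theorem inner_cross_cross_eq_neg_inner_tdir (hx : ‖x‖ = 1) :
    ⟪cross p x, cross x q⟫ = -⟪tdir x p, tdir x q⟫ := by
  rw [← cross_tdir_left p x, ← cross_tdir_right x q, inner_cross_cross, inner_self_tdir hx,
    real_inner_self_eq_norm_sq, hx]
  ring

theorem det3_tdir_tdir : det3 x (tdir x q) (tdir x p) = det3 p x q := by
  simp only [det3, tdir, PiLp.sub_apply, PiLp.smul_apply, smul_eq_mul]
  ring

theorem sin_sangle_mul_norm_mul_norm (hx : ‖x‖ = 1) :
    sin (sangle p x q) * (‖tdir x p‖ * ‖tdir x q‖) = |det3 x (tdir x q) (tdir x p)| := by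
  have h := norm_cross (tdir x q) (tdir x p)
  rw [cross_eq_det3_smul hx (inner_self_tdir hx) (inner_self_tdir hx), norm_smul, hx, mul_one,
    norm_eq_abs, InnerProductGeometry.angle_comm] at h
  rw [h, mul_comm ‖tdir x p‖, mul_comm]
  rfl

theorem sin_iangle_mul_norm_mul_norm (hx : ‖x‖ = 1) :
    sin (iangle p x q) * (‖tdir x p‖ * ‖tdir x q‖) = det3 x (tdir x q) (tdir x p) := by
  have h := sin_sangle_mul_norm_mul_norm (p := p) (q := q) hx
  unfold iangle
  split_ifs with hdet
  · rw [h, abs_of_nonneg hdet]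
  · rw [sin_two_pi_sub, neg_mul, h, abs_of_neg (not_le.1 hdet), neg_neg]

theorem norm_tdir_mul_norm_tdir (hx : ‖x‖ = 1) :
    ‖tdir x p‖ * ‖tdir x q‖ = ‖cross p x‖ * ‖cross x q‖ := by
  rw [← neg_cross_comm, norm_neg, norm_cross_eq_norm_tdir hx, norm_cross_eq_norm_tdir hx]

theorem inner_cross_cross_eq_neg_cos_iangle_mul (hx : ‖x‖ = 1) :
    ⟪cross p x, cross x q⟫ = -cos (iangle p x q) * (‖cross p x‖ * ‖cross x q‖) := by
  rw [inner_cross_cross_eq_neg_inner_tdir hx, ← cos_iangle_mul_norm_mul_norm,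
    norm_tdir_mul_norm_tdir hx, neg_mul]

theorem det3_eq_sin_iangle_mul (hx : ‖x‖ = 1) :
    det3 p x q = sin (iangle p x q) * (‖cross p x‖ * ‖cross x q‖) := by
  rw [← det3_tdir_tdir, ← sin_iangle_mul_norm_mul_norm hx, norm_tdir_mul_norm_tdir hx]

theorem cross_cross_cross_eq_det3_smul : cross (cross p x) (cross x q) = det3 p x q • x := by
  rw [cross_cross_left, ← det3_eq_inner_cross, inner_self_cross, zero_smul, sub_zero]

end Angle

section Pole

/-- The unit normal of the oriented great circle through `p` and `q`. The poles of the sides of a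
spherical polygon are the vertices of its polar dual. -/
def pole (p q : E3) : E3 := NormedSpace.normalize (cross p q)

/-- The points `p` and `q` of the unit sphere are joined by a short geodesic arc of length in
`(0, π)`. -/
structure IsEdge (p q : E3) : Prop where
  norm_left : ‖p‖ = 1
  norm_right : ‖q‖ = 1
  sdist_mem_Ioo : sdist p q ∈ Set.Ioo 0 π

variable {p x y q p' x' y' q' : E3}

theorem sdist_eq_angle (hp : ‖p‖ = 1) (hq : ‖q‖ = 1) :
    sdist p q = InnerProductGeometry.angle p q := by
  rw [sdist, InnerProductGeometry.angle, hp, hq, one_mul, div_one]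

theorem cos_sdist (hp : ‖p‖ = 1) (hq : ‖q‖ = 1) : cos (sdist p q) = ⟪p, q⟫ := by
  rw [sdist_eq_angle hp hq, InnerProductGeometry.cos_angle, hp, hq, one_mul, div_one]

namespace IsEdge

theorem norm_cross (h : IsEdge p q) : ‖cross p q‖ = sin (sdist p q) := by
  rw [_root_.norm_cross, h.norm_left, h.norm_right, one_mul, one_mul,
    sdist_eq_angle h.norm_left h.norm_right]

theorem sin_sdist_pos (h : IsEdge p q) : 0 < sin (sdist p q) :=
  sin_pos_of_mem_Ioo h.sdist_mem_Ioo

theorem norm_cross_pos (h : IsEdge p q) : 0 < ‖cross p q‖ :=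
  h.norm_cross ▸ h.sin_sdist_pos

theorem norm_pole (h : IsEdge p q) : ‖pole p q‖ = 1 :=
  NormedSpace.norm_normalize (norm_pos_iff.1 h.norm_cross_pos)

theorem pole_ne_zero (h : IsEdge p q) : pole p q ≠ 0 :=
  norm_ne_zero_iff.1 (h.norm_pole.trans_ne one_ne_zero)

theorem cross_eq_smul_pole (h : IsEdge p q) : cross p q = sin (sdist p q) • pole p q := by
  rw [← h.norm_cross, pole, NormedSpace.norm_smul_normalize]

theorem inner_pole_pole (hpx : IsEdge p x) (hxq : IsEdge x q) :
    ⟪pole p x, pole x q⟫ = -cos (iangle p x q) := by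
  have hp := hpx.norm_cross_pos.ne'
  have hq := hxq.norm_cross_pos.ne'
  rw [pole, pole, NormedSpace.normalize, NormedSpace.normalize, real_inner_smul_left,
    real_inner_smul_right, inner_cross_cross_eq_neg_cos_iangle_mul hpx.norm_right]
  field_simp

theorem cross_pole_pole (hpx : IsEdge p x) (hxq : IsEdge x q) :
    cross (pole p x) (pole x q) = sin (iangle p x q) • x := by
  have hp := hpx.norm_cross_pos.ne'
  have hq := hxq.norm_cross_pos.ne'
  rw [pole, pole, NormedSpace.normalize, NormedSpace.normalize, map_smul, LinearMap.map_smul₂,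
    cross_cross_cross_eq_det3_smul, det3_eq_sin_iangle_mul hpx.norm_right, smul_smul, smul_smul]
  congr 1
  field_simp

theorem dual_law_of_cosines (hpx : IsEdge p x) (hxy : IsEdge x y) (hyq : IsEdge y q) :
    ⟪pole p x, pole y q⟫ = cos (iangle p x y) * cos (iangle x y q)
      - sin (iangle p x y) * sin (iangle x y q) * cos (sdist x y) := by
  have h := inner_cross_cross (pole p x) (pole x y) (pole x y) (pole y q)
  rw [cross_pole_pole hpx hxy, cross_pole_pole hxy hyq, inner_pole_pole hpx hxy,
    inner_pole_pole hxy hyq, real_inner_self_eq_norm_sq, hxy.norm_pole, real_inner_smul_left,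
    real_inner_smul_right, ← cos_sdist hxy.norm_left hxy.norm_right] at h
  linarith

theorem det3_pole (hpx : IsEdge p x) (hxy : IsEdge x y) (hyq : IsEdge y q) :
    det3 (pole p x) (pole x y) (pole y q)
      = sin (iangle p x y) * sin (iangle x y q) * sin (sdist x y) := by
  have h : det3 (pole p x) (pole x y) (pole y q) • pole x y =
      (sin (iangle p x y) * sin (iangle x y q) * sin (sdist x y)) • pole x y := by
    rw [← cross_cross_cross_eq_det3_smul, cross_pole_pole hpx hxy, cross_pole_pole hxy hyq,
      map_smul, LinearMap.map_smul₂, hxy.cross_eq_smul_pole, smul_smul, smul_smul]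
    congr 1
    ring
  exact smul_left_injective ℝ hxy.pole_ne_zero h

theorem pole_right_eq (hpx : IsEdge p x) (hxq : IsEdge x q) (hpx' : IsEdge p' x')
    (hxq' : IsEdge x' q') (hx : x = x') (hpole : pole p x = pole p' x')
    (hang : iangle p x q = iangle p' x' q') : pole x q = pole x' q' := by
  refine eq_of_inner_eq_of_cross_eq hpx.pole_ne_zero ?_ ?_
  · rw [inner_pole_pole hpx hxq, hpole, inner_pole_pole hpx' hxq', hang]
  · rw [cross_pole_pole hpx hxq, hpole, cross_pole_pole hpx' hxq', hang, hx]

theorem pole_left_eq (hpx : IsEdge p x) (hxq : IsEdge x q) (hpx' : IsEdge p' x')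
    (hxq' : IsEdge x' q') (hx : x = x') (hpole : pole x q = pole x' q')
    (hang : iangle p x q = iangle p' x' q') : pole p x = pole p' x' := by
  refine eq_of_inner_eq_of_cross_eq hxq.pole_ne_zero ?_ ?_
  · rw [real_inner_comm, inner_pole_pole hpx hxq, hpole, real_inner_comm,
      inner_pole_pole hpx' hxq', hang]
  · rw [← neg_cross_comm, cross_pole_pole hpx hxq, hpole, ← neg_cross_comm,
      cross_pole_pole hpx' hxq', hang, hx]

theorem sdist_eq_of_pole_eq (hpx : IsEdge p x) (hxy : IsEdge x y) (hyq : IsEdge y q)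
    (hpx' : IsEdge p' x') (hxy' : IsEdge x' y') (hyq' : IsEdge y' q')
    (hpole_left : pole p x = pole p' x') (hpole_right : pole y q = pole y' q')
    (hx : iangle p x y = iangle p' x' y') (hy : iangle x y q = iangle x' y' q')
    (hx₀ : sin (iangle p x y) ≠ 0) (hy₀ : sin (iangle x y q) ≠ 0) :
    sdist x y = sdist x' y' := by
  have h := dual_law_of_cosines hpx hxy hyq
  rw [hpole_left, hpole_right, dual_law_of_cosines hpx' hxy' hyq', ← hx, ← hy] at h
  have hcos : cos (sdist x y) = cos (sdist x' y') :=
    mul_left_cancel₀ (mul_ne_zero hx₀ hy₀) (sub_right_injective h).symm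
  exact injOn_cos (Set.Ioo_subset_Icc_self hxy.sdist_mem_Ioo)
    (Set.Ioo_subset_Icc_self hxy'.sdist_mem_Ioo) hcos

/-- The polar dual of the edge `x y` is a vertex whose distances to its two neighbours are known;
this leaves two mirror-image positions, which the sign of `det3_pole` tells apart. -/
theorem pole_eq_of_pole_eq (hpx : IsEdge p x) (hxy : IsEdge x y) (hyq : IsEdge y q)
    (hpx' : IsEdge p' x') (hxy' : IsEdge x' y') (hyq' : IsEdge y' q')
    (hpole_left : pole p x = pole p' x') (hpole_right : pole y q = pole y' q')
    (hx : iangle p x y = iangle p' x' y') (hy : iangle x y q = iangle x' y' q')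
    (hx₀ : sin (iangle p x y) ≠ 0) (hy₀ : sin (iangle x y q) ≠ 0) :
    pole x y = pole x' y' := by
  have hdist := sdist_eq_of_pole_eq hpx hxy hyq hpx' hxy' hyq' hpole_left hpole_right hx hy hx₀ hy₀
  refine eq_of_inner_eq_of_det3_eq (u := pole p x) (x := pole y q) ?_ ?_ ?_ ?_
  · rw [det3_pole hpx hxy hyq]
    exact mul_ne_zero (mul_ne_zero hx₀ hy₀) hxy.sin_sdist_pos.ne'
  · rw [inner_pole_pole hpx hxy, hpole_left, inner_pole_pole hpx' hxy', hx]
  · rw [inner_pole_pole hxy hyq, hpole_right, inner_pole_pole hxy' hyq', hy]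
  · rw [det3_pole hpx hxy hyq, hpole_left, hpole_right, det3_pole hpx' hxy' hyq', hx, hy, hdist]

theorem eq_of_pole_eq (hpx : IsEdge p x) (hxq : IsEdge x q) (hpx' : IsEdge p' x')
    (hxq' : IsEdge x' q') (hpole_left : pole p x = pole p' x')
    (hpole_right : pole x q = pole x' q') (hx : iangle p x q = iangle p' x' q')
    (hx₀ : sin (iangle p x q) ≠ 0) : x = x' := by
  have h := cross_pole_pole hpx hxq
  rw [hpole_left, hpole_right, cross_pole_pole hpx' hxq', ← hx] at h
  exact (smul_right_injective E3 hx₀ h).symm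

end IsEdge

end Pole

section Rotation

variable {a b a' b' p x q : E3}

theorem IsEdge.gram_frame (h : IsEdge a b) :
    Matrix.gram ℝ ![a, b, cross a b] =
      !![1, cos (sdist a b), 0; cos (sdist a b), 1, 0; 0, 0, sin (sdist a b) ^ 2] := by
  ext i j
  fin_cases i <;> fin_cases j <;>
    simp [Matrix.gram_apply, h.norm_left, h.norm_right, h.norm_cross, inner_self_cross,
      inner_cross_self, cos_sdist h.norm_left h.norm_right, real_inner_comm]

theorem IsEdge.det3_frame_ne_zero (h : IsEdge a b) : det3 a b (cross a b) ≠ 0 := by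
  rw [det3_cross_right]
  exact (pow_pos h.norm_cross_pos 2).ne'

theorem IsEdge.exists_rotation (h : IsEdge a b) (h' : IsEdge a' b')
    (hdist : sdist a b = sdist a' b') :
    ∃ g : E3 ≃ₗᵢ[ℝ] E3, LinearMap.det (g.toLinearEquiv : E3 →ₗ[ℝ] E3) = 1 ∧
      g a = a' ∧ g b = b' := by
  obtain ⟨A, hA⟩ := exists_basis_of_det3_ne_zero h.det3_frame_ne_zero
  obtain ⟨B, hB⟩ := exists_basis_of_det3_ne_zero h'.det3_frame_ne_zero
  have hgram (i j : Fin 3) : ⟪A i, A j⟫ = ⟪B i, B j⟫ := by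
    have := h.gram_frame.trans (hdist ▸ h'.gram_frame.symm)
    simpa only [hA, hB, Matrix.gram_apply] using congrFun₂ this i j
  obtain ⟨g, hg⟩ := exists_linearIsometryEquiv_of_inner_basis_eq A B hgram
  have hga : g a = a' := by simpa [hA, hB] using hg 0
  have hgb : g b = b' := by simpa [hA, hB] using hg 1
  have hgc : g (cross a b) = cross a' b' := by simpa [hA, hB] using hg 2
  refine ⟨g, ?_, hga, hgb⟩
  have hdet := det3_map a b (cross a b) (g.toLinearEquiv : E3 →ₗ[ℝ] E3)
  simp only [LinearEquiv.coe_coe, LinearIsometryEquiv.coe_toLinearEquiv, hga, hgb, hgc,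
    det3_cross_right, h.norm_cross, h'.norm_cross, hdist] at hdet
  exact (mul_eq_right₀ (pow_pos h'.sin_sdist_pos 2).ne').1 hdet.symm

variable (g : E3 ≃ₗᵢ[ℝ] E3)

theorem sdist_map (p q : E3) : sdist (g p) (g q) = sdist p q := by
  rw [sdist, sdist, g.inner_map_map]

theorem IsEdge.map (h : IsEdge p q) : IsEdge (g p) (g q) where
  norm_left := (g.norm_map p).trans h.norm_left
  norm_right := (g.norm_map q).trans h.norm_right
  sdist_mem_Ioo := (sdist_map g p q).symm ▸ h.sdist_mem_Ioo

theorem tdir_map (x q : E3) : tdir (g x) (g q) = g (tdir x q) := by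
  rw [tdir, tdir, map_sub, map_smul, g.inner_map_map]

theorem sangle_map (p x q : E3) : sangle (g p) (g x) (g q) = sangle p x q := by
  change InnerProductGeometry.angle (tdir _ _) (tdir _ _) = _
  rw [tdir_map, tdir_map]
  exact g.toLinearIsometry.angle_map _ _

variable {g} in
theorem iangle_map_of_det_eq_one (hg : LinearMap.det (g.toLinearEquiv : E3 →ₗ[ℝ] E3) = 1)
    (p x q : E3) : iangle (g p) (g x) (g q) = iangle p x q := by
  have hdet : det3 (g x) (g (tdir x q)) (g (tdir x p)) = det3 x (tdir x q) (tdir x p) := by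
    simpa [hg] using det3_map x (tdir x q) (tdir x p) (g.toLinearEquiv : E3 →ₗ[ℝ] E3)
  rw [iangle, iangle, tdir_map, tdir_map, sangle_map, hdet]

end Rotation

theorem eq_of_iangle_eq {v w : Fin 4 → E3} (hv : ∀ i, IsEdge (v i) (v (i + 1)))
    (hw : ∀ i, IsEdge (w i) (w (i + 1))) (h₀ : v 0 = w 0) (h₁ : v 1 = w 1)
    (hang : ∀ i, iangle (v (i - 1)) (v i) (v (i + 1)) = iangle (w (i - 1)) (w i) (w (i + 1)))
    (hv₂ : sin (iangle (v 1) (v 2) (v 3)) ≠ 0) (hv₃ : sin (iangle (v 2) (v 3) (v 0)) ≠ 0) :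
    v = w := by
  have hpole₀ : pole (v 0) (v 1) = pole (w 0) (w 1) := by rw [h₀, h₁]
  have hpole₁ : pole (v 1) (v 2) = pole (w 1) (w 2) :=
    (hv 0).pole_right_eq (hv 1) (hw 0) (hw 1) h₁ hpole₀ (hang 1)
  have hpole₃ : pole (v 3) (v 0) = pole (w 3) (w 0) :=
    (hv 3).pole_left_eq (hv 0) (hw 3) (hw 0) h₀ hpole₀ (hang 0)
  have hpole₂ : pole (v 2) (v 3) = pole (w 2) (w 3) :=
    (hv 1).pole_eq_of_pole_eq (hv 2) (hv 3) (hw 1) (hw 2) (hw 3) hpole₁ hpole₃ (hang 2) (hang 3)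
      hv₂ hv₃
  have h₂ : v 2 = w 2 := (hv 1).eq_of_pole_eq (hv 2) (hw 1) (hw 2) hpole₁ hpole₂ (hang 2) hv₂
  have h₃ : v 3 = w 3 := (hv 2).eq_of_pole_eq (hv 3) (hw 2) (hw 3) hpole₂ hpole₃ (hang 3) hv₃
  ext1 i
  fin_cases i <;> assumption

theorem statement18_general (v w : Fin 4 → E3)
    (hv : ∀ i, ‖v i‖ = 1) (hw : ∀ i, ‖w i‖ = 1)
    (hvlen : ∀ i, sdist (v i) (v (i + 1)) ∈ Set.Ioo 0 π)
    (hwlen : ∀ i, sdist (w i) (w (i + 1)) ∈ Set.Ioo 0 π)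
    (hv₂ : iangle (v 1) (v 2) (v 3) ∉ ({0, π, 2 * π} : Set ℝ))
    (hv₃ : iangle (v 2) (v 3) (v 0) ∉ ({0, π, 2 * π} : Set ℝ))
    (hang : ∀ i, iangle (v (i - 1)) (v i) (v (i + 1)) = iangle (w (i - 1)) (w i) (w (i + 1)))
    (hlen : sdist (v 0) (v 1) = sdist (w 0) (w 1)) :
    ∃ g : E3 ≃ₗᵢ[ℝ] E3, LinearMap.det (g.toLinearEquiv : E3 →ₗ[ℝ] E3) = 1 ∧
      ∀ i, g (v i) = w i := by
  have hv_edge (i : Fin 4) : IsEdge (v i) (v (i + 1)) := ⟨hv i, hv _, hvlen i⟩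
  have hw_edge (i : Fin 4) : IsEdge (w i) (w (i + 1)) := ⟨hw i, hw _, hwlen i⟩
  obtain ⟨g, hg, hg₀, hg₁⟩ := (hv_edge 0).exists_rotation (hw_edge 0) hlen
  have iangle_g := iangle_map_of_det_eq_one hg
  have hgv : (fun i ↦ g (v i)) = w := by
    apply eq_of_iangle_eq (fun i ↦ (hv_edge i).map g) hw_edge hg₀ hg₁ <;> simp only [iangle_g]
    · exact hang
    · exact sin_iangle_ne_zero hv₂
    · exact sin_iangle_ne_zero hv₃
  exact ⟨g, hg, congrFun hgv⟩

/-- A spherical quadrilateral, possibly nonconvex and self-intersecting, with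
all four edge lengths in `(0, π)` and all four interior angles not equal to
`0`, `π` or `2π`, is uniquely determined up to an isometry of the sphere by
its four interior angles together with one edge length. -/
theorem statement18 (v w : Fin 4 → E3)
    (hv : ∀ i, ‖v i‖ = 1) (hw : ∀ i, ‖w i‖ = 1)
    (hvlen : ∀ i : Fin 4, sdist (v i) (v (i + 1)) ∈ Set.Ioo 0 π)
    (hwlen : ∀ i : Fin 4, sdist (w i) (w (i + 1)) ∈ Set.Ioo 0 π)
    (hvang : ∀ i : Fin 4,
      iangle (v (i - 1)) (v i) (v (i + 1)) ∉ ({0, π, 2 * π} : Set ℝ))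
    (hwang : ∀ i : Fin 4,
      iangle (w (i - 1)) (w i) (w (i + 1)) ∉ ({0, π, 2 * π} : Set ℝ))
    (hang : ∀ i : Fin 4,
      iangle (v (i - 1)) (v i) (v (i + 1)) = iangle (w (i - 1)) (w i) (w (i + 1)))
    (hlen : sdist (v 0) (v 1) = sdist (w 0) (w 1)) :
    ∃ g : E3 ≃ₗᵢ[ℝ] E3, ∀ i, g (v i) = w i := by
  obtain ⟨g, -, hg⟩ := statement18_general v w hv hw hvlen hwlen (hvang 2) (hvang 3) hang hlen
  exact ⟨g, hg⟩
end
end
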